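/- arXiv:1308.4439 — 2 statements merged into one kernel-verified Lean document; each statement's English description precedes it below -/
import Mathlib

section
/- Let G(λ_0,x) = Σ_{l=0}^∞ (−1)^l l! (πλ_0 x^{â_0})^{−1−l} and ξ(λ,x) = γ°( G(λ_0,x) · ∏_{i=1}^N exp(π λ_i x^{â_i}) ) ∈ S. Then α*(ξ(λ,x)) = p·ξ(λ,x). -/
open scoped BigOperators Classical

namespace AHG

/-- `hat v = (1, v) ∈ ℤ^{n+1}`: coordinate `0` equals `1`, the rest is `v`. -/
def hat {n : ℕ} (v : Fin n → ℤ) : Fin (n + 1) → ℤ := Fin.cons 1 v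

/-- The coefficients `b_i` of the Dwork series
`θ(t) = exp(π(t - t^p)) = exp(πt)·exp(-πt^p) = Σ b_i t^i`;
explicitly `b_i = Σ_{j + p k = i} π^{j+k} (-1)^k / (j! k!)`. -/
noncomputable def dworkB (p : ℕ) {K : Type*} [Field K] (π : K) (i : ℕ) : K :=
  ∑ k ∈ Finset.range (i + 1),
    if p * k ≤ i then
      ((-1 : K) ^ k * π ^ (i - p * k + k)) /
        ((Nat.factorial (i - p * k) : K) * (Nat.factorial k : K))
    else 0

/-- The real cone `C` generated by `â_0, …, â_N`. -/
def cone {n N : ℕ} (a : Fin (N + 1) → Fin n → ℤ) : Set (Fin (n + 1) → ℝ) :=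
  {x | ∃ t : Fin (N + 1) → ℝ, (∀ j, 0 ≤ t j) ∧
      x = ∑ j, t j • fun i => (hat (a j) i : ℝ)}

/-- `M = C ∩ ℤA`. -/
def latticeM {n N : ℕ} (a : Fin (N + 1) → Fin n → ℤ) : Set (Fin (n + 1) → ℤ) :=
  {μ | (fun i => (μ i : ℝ)) ∈ cone a ∧
      μ ∈ AddSubgroup.closure (Set.range fun j => hat (a j))}

/-- `M°`: the elements of `M` lying on no proper (exposed) face of `C`, i.e. every linear
functional nonnegative on `C` and vanishing at `μ` vanishes identically on `C`. -/
def latticeMint {n N : ℕ} (a : Fin (N + 1) → Fin n → ℤ) : Set (Fin (n + 1) → ℤ) :=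
  {μ | μ ∈ latticeM a ∧
      ∀ ℓ : (Fin (n + 1) → ℝ) →ₗ[ℝ] ℝ, (∀ x ∈ cone a, 0 ≤ ℓ x) →
        ℓ (fun i => (μ i : ℝ)) = 0 → ∀ x ∈ cone a, ℓ x = 0}

/-- `a 0` is the unique lattice point interior to `Δ = conv(a 1, …, a N)`. -/
def uniqueInteriorPoint {n N : ℕ} (a : Fin (N + 1) → Fin n → ℤ) : Prop :=
  (fun i => (a 0 i : ℝ)) ∈
      interior (convexHull ℝ (Set.range fun j : Fin N => fun i => (a j.succ i : ℝ))) ∧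
    ∀ v : Fin n → ℤ,
      (fun i => (v i : ℝ)) ∈
          interior (convexHull ℝ (Set.range fun j : Fin N => fun i => (a j.succ i : ℝ))) →
        v = a 0

/-- The set `L_+`, identified with the tuples `(l_1,…,l_N) ∈ ℤ_{≥0}^N` such that
`Σ l_i â_i = (Σ l_i) â_0` (then `l_0 = -Σ l_i`). -/
def LplusSet {n N : ℕ} (a : Fin (N + 1) → Fin n → ℤ) : Set (Fin N → ℕ) :=
  {l | ∑ i : Fin N, l i • hat (a i.succ) = (∑ i : Fin N, l i) • hat (a 0)}

/-- The norm (sup of coefficient norms) of an element of `R`, i.e. of a formal power series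
in the variables `λ_i/λ_0`, `i = 1, …, N`. -/
noncomputable def Rnorm {N : ℕ} {K : Type*} [NormedField K]
    (f : MvPowerSeries (Fin N) K) : ℝ :=
  ⨆ ν : Fin N →₀ ℕ, ‖f ν‖

/-- Membership in `R`: bounded coefficients. -/
def memR {N : ℕ} {K : Type*} [NormedField K] (f : MvPowerSeries (Fin N) K) : Prop :=
  BddAbove (Set.range fun ν : Fin N →₀ ℕ => ‖f ν‖)

/-- Norm-convergence (in the sup norm of `R`) of a series of elements of `R` to `g`. -/
def HasSumR {ι : Type*} {N : ℕ} {K : Type*} [NormedField K]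
    (f : ι → MvPowerSeries (Fin N) K) (g : MvPowerSeries (Fin N) K) : Prop :=
  Filter.Tendsto (fun s : Finset ι => Rnorm (g - ∑ i ∈ s, f i)) Filter.atTop (nhds 0)

/-- Invertibility in `R`. -/
def invR {N : ℕ} {K : Type*} [NormedField K] (f : MvPowerSeries (Fin N) K) : Prop :=
  memR f ∧ ∃ g : MvPowerSeries (Fin N) K, memR g ∧ f * g = 1

/-- `B_μ(1, y_1, …, y_N)` as a power series (in fact a polynomial) in `y_i = λ_i/λ_0`:
the coefficient of `y^ν` is `b_{ν_0} b_{ν_1} ⋯ b_{ν_N}` where `ν_0 = μ_0 - Σ ν_i`,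
whenever `(ν_0, ν_1, …, ν_N)` is a nonnegative solution of `Σ ν_i â_i = μ`, and `0` otherwise. -/
noncomputable def Bone (p : ℕ) {n N : ℕ} (a : Fin (N + 1) → Fin n → ℤ)
    {K : Type*} [Field K] (π : K) (μ : Fin (n + 1) → ℤ) : MvPowerSeries (Fin N) K :=
  fun ν =>
    if 0 ≤ μ 0 - ∑ i : Fin N, (ν i : ℤ) ∧
        (μ 0 - ∑ i : Fin N, (ν i : ℤ)) • hat (a 0) +
          ∑ i : Fin N, (ν i : ℤ) • hat (a i.succ) = μ then
      dworkB p π (μ 0 - ∑ i : Fin N, (ν i : ℤ)).toNat * ∏ i : Fin N, dworkB p π (ν i)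
    else 0

/-- The substitution `λ_i/λ_0 ↦ λ_i^p/λ_0^p` on `R`, i.e. `ξ(λ) ↦ ξ(λ^p)`. -/
noncomputable def frobR (p : ℕ) {N : ℕ} {K : Type*} [Field K]
    (f : MvPowerSeries (Fin N) K) : MvPowerSeries (Fin N) K :=
  fun ν => if h : ∃ ν' : Fin N →₀ ℕ, p • ν' = ν then f h.choose else 0

/-- The term indexed by `ν ∈ M°` in the series defining `η_ρ`:
`π^{ρ_0-ν_0} B_{pν-ρ}(1, λ_1/λ_0, …, λ_N/λ_0) ξ_ν(λ^p)` when `pν - ρ ∈ M`, else `0`. -/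
noncomputable def etaTerm (p : ℕ) {n N : ℕ} (a : Fin (N + 1) → Fin n → ℤ)
    {K : Type*} [Field K] (π : K)
    (ξ : {μ : Fin (n + 1) → ℤ // μ ∈ latticeMint a} → MvPowerSeries (Fin N) K)
    (ρ : Fin (n + 1) → ℤ) (ν : {μ : Fin (n + 1) → ℤ // μ ∈ latticeMint a}) :
    MvPowerSeries (Fin N) K :=
  if (p : ℤ) • ν.1 - ρ ∈ latticeM a then
    π ^ (ρ 0 - ν.1 0) • (Bone p a π ((p : ℤ) • ν.1 - ρ) * frobR p (ξ ν))
  else 0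


/-- The index type `M°` (as a subtype). -/
abbrev Msub {n N : ℕ} (a : Fin (N + 1) → Fin n → ℤ) : Type _ :=
  {μ : Fin (n + 1) → ℤ // μ ∈ latticeMint a}

/-- Membership in `S`: a family `(ξ_μ)_{μ ∈ M°}` of elements of `R` with uniformly
bounded coefficients. -/
def memS {n N : ℕ} (a : Fin (N + 1) → Fin n → ℤ) {K : Type*} [NormedField K]
    (ξ : {μ : Fin (n + 1) → ℤ // μ ∈ latticeMint a} → MvPowerSeries (Fin N) K) : Prop :=
  BddAbove (Set.range
    fun q : {μ : Fin (n + 1) → ℤ // μ ∈ latticeMint a} × (Fin N →₀ ℕ) => ‖ξ q.1 q.2‖)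

/-- The norm on `S`. -/
noncomputable def Snorm {n N : ℕ} (a : Fin (N + 1) → Fin n → ℤ) {K : Type*} [NormedField K]
    (ξ : {μ : Fin (n + 1) → ℤ // μ ∈ latticeMint a} → MvPowerSeries (Fin N) K) : ℝ :=
  ⨆ μ : {μ : Fin (n + 1) → ℤ // μ ∈ latticeMint a}, Rnorm (ξ μ)

/-- The truncation `Φ_1` of `Φ`, as a function of `λ = (λ_0, …, λ_N)`. -/
noncomputable def Phi1 (p : ℕ) {n N : ℕ} (a : Fin (N + 1) → Fin n → ℤ)
    {K : Type*} [Field K] (lam : Fin (N + 1) → K) : K :=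
  ∑ l ∈ (Fintype.piFinset fun _ : Fin N => Finset.range p).filter
      (fun l => l ∈ LplusSet a ∧ ∑ i : Fin N, l i ≤ p - 1),
    (-1 : K) ^ (∑ i : Fin N, l i) * (Nat.multinomial Finset.univ l : K) *
      ∏ i : Fin N, (lam i.succ / lam 0) ^ l i

/-- The open polydisk `𝒟`. -/
def Dopen {N : ℕ} {K : Type*} [NormedField K] : Set (Fin (N + 1) → K) :=
  {lam | lam 0 ≠ 0 ∧ ∀ i : Fin N, ‖lam i.succ / lam 0‖ < 1}

/-- The region `𝒟_+`. -/
def Dplus (p : ℕ) {n N : ℕ} (a : Fin (N + 1) → Fin n → ℤ) {K : Type*} [NormedField K] :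
    Set (Fin (N + 1) → K) :=
  {lam | lam 0 ≠ 0 ∧ (∀ i : Fin N, ‖lam i.succ / lam 0‖ ≤ 1) ∧ ‖Phi1 p a lam‖ = 1}

/-- `f` is (on `𝒟_+`) a rational function of `λ_1/λ_0, …, λ_N/λ_0` defined at every
point of `𝒟_+`. -/
def RatOnDplus (p : ℕ) {n N : ℕ} (a : Fin (N + 1) → Fin n → ℤ) {K : Type*} [NormedField K]
    (f : (Fin (N + 1) → K) → K) : Prop :=
  ∃ q r : MvPolynomial (Fin N) K,
    (∀ lam ∈ Dplus p a (K := K), MvPolynomial.eval (fun i => lam i.succ / lam 0) r ≠ 0) ∧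
    ∀ lam ∈ Dplus p a (K := K),
      f lam = MvPolynomial.eval (fun i => lam i.succ / lam 0) q /
        MvPolynomial.eval (fun i => lam i.succ / lam 0) r

/-- `F` is a uniform limit on `𝒟_+` of rational functions in the `λ_i/λ_0` defined
at every point of `𝒟_+`. -/
def UnifLimitRat (p : ℕ) {n N : ℕ} (a : Fin (N + 1) → Fin n → ℤ) {K : Type*} [NormedField K]
    (F : (Fin (N + 1) → K) → K) : Prop :=
  ∃ u : ℕ → (Fin (N + 1) → K) → K, (∀ k, RatOnDplus p a (u k)) ∧
    TendstoUniformlyOn u F Filter.atTop (Dplus p a (K := K))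

/-- Membership in `R'`: the power series converges on `𝒟` and its sum extends to an
element of `R'`, i.e. to a uniform limit on `𝒟_+` of rational functions in the `λ_i/λ_0`
defined at every point of `𝒟_+`. -/
def memR' (p : ℕ) {n N : ℕ} (a : Fin (N + 1) → Fin n → ℤ) {K : Type*} [NormedField K]
    (c : MvPowerSeries (Fin N) K) : Prop :=
  ∃ F : (Fin (N + 1) → K) → K, UnifLimitRat p a F ∧
    ∀ lam ∈ Dopen (N := N) (K := K),
      HasSum (fun ν : Fin N →₀ ℕ => c ν * ∏ i : Fin N, (lam i.succ / lam 0) ^ ν i) (F lam)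

/-- Invertibility in `R'`. -/
def invR' (p : ℕ) {n N : ℕ} (a : Fin (N + 1) → Fin n → ℤ) {K : Type*} [NormedField K]
    (f : MvPowerSeries (Fin N) K) : Prop :=
  memR' p a f ∧ ∃ g : MvPowerSeries (Fin N) K, memR' p a g ∧ f * g = 1

/-- Membership in `S'`. -/
def memS' (p : ℕ) {n N : ℕ} (a : Fin (N + 1) → Fin n → ℤ) {K : Type*} [NormedField K]
    (ξ : {μ : Fin (n + 1) → ℤ // μ ∈ latticeMint a} → MvPowerSeries (Fin N) K) : Prop :=
  memS a ξ ∧ ∀ μ, memR' p a (ξ μ)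

/-- Membership in `T`: `ξ ∈ S`, `ξ_{â_0} = 1` and `‖ξ‖ = 1`; the distinguished index
`μ0 ∈ M°` is the point `â_0`. -/
def memT {n N : ℕ} (a : Fin (N + 1) → Fin n → ℤ) {K : Type*} [NormedField K]
    (μ0 : {μ : Fin (n + 1) → ℤ // μ ∈ latticeMint a})
    (ξ : {μ : Fin (n + 1) → ℤ // μ ∈ latticeMint a} → MvPowerSeries (Fin N) K) : Prop :=
  memS a ξ ∧ ξ μ0 = 1 ∧ Snorm a ξ = 1

/-- `ζ` is a value of the map `β` at `ξ`: `ζ = α*(ξ)/η_{â_0}`, where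
`α*(ξ) = (η_ρ)_{ρ ∈ M°}` is given by the norm-convergent series of `etaTerm`s. -/
def isBeta (p : ℕ) {n N : ℕ} (a : Fin (N + 1) → Fin n → ℤ) {K : Type*} [NormedField K] (π : K)
    (μ0 : {μ : Fin (n + 1) → ℤ // μ ∈ latticeMint a})
    (ξ ζ : {μ : Fin (n + 1) → ℤ // μ ∈ latticeMint a} → MvPowerSeries (Fin N) K) : Prop :=
  ∃ η : {μ : Fin (n + 1) → ℤ // μ ∈ latticeMint a} → MvPowerSeries (Fin N) K,
    (∀ ρ, HasSumR (etaTerm p a π ξ ρ.1) (η ρ)) ∧ ∀ ρ, ζ ρ = η ρ * (η μ0)⁻¹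

/-- The coefficients `ξ_ρ` (Eq. (3.4) of the paper) of
`ξ(λ,x) = γ°(G(λ_0,x) ∏_{i=1}^N exp(πλ_i x^{â_i}))`:
`ξ_ρ = Σ (-1)^{ρ_0-1+Σl_i} (ρ_0-1+Σl_i)!/(l_1!⋯l_N!) ∏ (λ_i/λ_0)^{l_i}`, summed over
`(l_1,…,l_N) ∈ ℤ_{≥0}^N` such that `l_0 := ρ_0-1+Σl_i ≥ 0` and
`Σ l_i â_i - (l_0+1) â_0 = -ρ`. -/
noncomputable def xiRho {n N : ℕ} (a : Fin (N + 1) → Fin n → ℤ) (K : Type*) [Field K]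
    (ρ : Fin (n + 1) → ℤ) : MvPowerSeries (Fin N) K :=
  fun l =>
    if 0 ≤ ρ 0 - 1 + ∑ i : Fin N, (l i : ℤ) ∧
        (∑ i : Fin N, (l i : ℤ) • hat (a i.succ)) -
          (ρ 0 + ∑ i : Fin N, (l i : ℤ)) • hat (a 0) = -ρ then
      (-1 : K) ^ (ρ 0 - 1 + ∑ i : Fin N, (l i : ℤ)) *
        ((ρ 0 - 1 + ∑ i : Fin N, (l i : ℤ)).toNat.factorial : K) /
        ((∏ i : Fin N, (l i).factorial : ℕ) : K)
    else 0

/-- The series `Φ`, as a formal power series in the variables `λ_i/λ_0`. -/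
noncomputable def PhiSeries {n N : ℕ} (a : Fin (N + 1) → Fin n → ℤ) (K : Type*) [Field K] :
    MvPowerSeries (Fin N) K :=
  fun l =>
    if (fun i => l i) ∈ LplusSet a then
      (-1 : K) ^ (∑ i : Fin N, l i) * (Nat.multinomial Finset.univ l : K)
    else 0

/-- The truncation `Φ_1` of `Φ`, as a formal power series in the variables `λ_i/λ_0`. -/
noncomputable def Phi1Series (p : ℕ) {n N : ℕ} (a : Fin (N + 1) → Fin n → ℤ)
    (K : Type*) [Field K] : MvPowerSeries (Fin N) K :=
  fun l =>
    if (fun i => l i) ∈ LplusSet a ∧ ∑ i : Fin N, l i ≤ p - 1 then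
      (-1 : K) ^ (∑ i : Fin N, l i) * (Nat.multinomial Finset.univ l : K)
    else 0

/-- `B_μ(λ_0, …, λ_N)` as a function of `λ` (a finite sum; `finsum` junk value `0`
is irrelevant since the relevant index set is finite). -/
noncomputable def Bfull (p : ℕ) {n N : ℕ} (a : Fin (N + 1) → Fin n → ℤ)
    {K : Type*} [Field K] (π : K) (μ : Fin (n + 1) → ℤ) (lam : Fin (N + 1) → K) : K :=
  finsum fun ν : Fin (N + 1) → ℕ =>
    if ∑ j, ν j • hat (a j) = μ then
      (∏ j, dworkB p π (ν j)) * ∏ j, lam j ^ ν j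
    else 0

end AHG

open scoped BigOperators Classical

/-!
In the coefficient of `∏_{i≥1} λ_i^{l_i}`, the factors `i ≥ 1` contribute only the identity
`θ(t) · exp(πt^p) = exp(πt)`.  The variable `λ_0` contributes the one-variable statement that
`G(t) = ∑ (-1)^l l! (πt)^{-1-l}` satisfies `γ°(θ(t) G(t^p)) = p G(t)`: `G` solves an inhomogeneous
first-order equation, so the partial sums of the series for each coefficient telescope against the
recursion for the `b_i` that comes from `θ' = π(1 - p t^{p-1})θ`.

Convergence, in one variable and then uniformly in `ρ`, rests on an estimate `‖b_i‖ ≤ r^i` with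
`r^p < ‖π‖`.  It follows from Dwork's argument: `f = exp(t + t^p/p)` has `f^p = f(t^p) · E` with
`E ≡ 1` modulo `p` in a ring of series whose coefficients have controlled growth, which bounds the
coefficients of `f` inductively.
-/

namespace AHG

open PowerSeries Filter Topology
open Finset.HasAntidiagonal (antidiagonal mem_antidiagonal)

theorem derivative_expand {R : Type*} [CommRing R] {p : ℕ} (hp : p ≠ 0) (f : R⟦X⟧) :
    derivative R (expand p hp f) = (p : R⟦X⟧) * X ^ (p - 1) * expand p hp (derivative R f) := by
  rw [expand_apply, derivative_subst (HasSubst.X_pow hp), Derivation.leibniz_pow, derivative_X,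
    smul_eq_mul, mul_one, nsmul_eq_mul, mul_comm, expand_apply]

section DworkSeries

variable {K : Type*} [Field K]

/-- The exponential series `exp(ct)`. -/
noncomputable def expSeries (c : K) : K⟦X⟧ :=
  PowerSeries.mk fun j => c ^ j / (j.factorial : K)

theorem coeff_expSeries (c : K) (j : ℕ) : coeff j (expSeries c) = c ^ j / (j.factorial : K) :=
  coeff_mk _ _

theorem constantCoeff_expSeries (c : K) : constantCoeff (expSeries c) = 1 := by
  rw [← coeff_zero_eq_constantCoeff_apply, coeff_expSeries, pow_zero, Nat.factorial_zero,
    Nat.cast_one, div_one]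

theorem expSeries_zero : expSeries (0 : K) = 1 := by
  ext j
  rcases j with _ | j <;> simp [coeff_expSeries, coeff_one]

theorem rescale_expSeries (a c : K) : rescale a (expSeries c) = expSeries (a * c) := by
  ext j
  rw [coeff_rescale, coeff_expSeries, coeff_expSeries, mul_pow, mul_div_assoc]

/-- Dwork's series `θ(t) = exp(π(t - t^p))`, written `exp(πt)·exp(-πt^p)`. -/
noncomputable def dworkSeries (p : ℕ) (hp : p ≠ 0) (π : K) : K⟦X⟧ :=
  expSeries π * expand p hp (expSeries (-π))

theorem coeff_dworkSeries {p : ℕ} (hp : p ≠ 0) (π : K) (i : ℕ) :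
    coeff i (dworkSeries p hp π) = dworkB p π i := by
  rw [dworkSeries, coeff_mul, dworkB, ← Finset.Nat.sum_antidiagonal_swap,
    Finset.Nat.sum_antidiagonal_eq_sum_range_succ_mk]
  simp only [Prod.swap, coeff_expand, mul_ite, mul_zero]
  rw [← Finset.sum_filter, ← Finset.sum_filter]
  have hp0 := Nat.pos_of_ne_zero hp
  refine (Finset.sum_nbij' (p * ·) (· / p) ?_ ?_ ?_ ?_ ?_).symm
  · simp only [Finset.mem_filter, Finset.mem_range]
    exact fun k hk => ⟨by omega, dvd_mul_right _ _⟩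
  · simp only [Finset.mem_filter, Finset.mem_range]
    intro t ht
    rw [Nat.mul_div_cancel' ht.2]
    exact ⟨(Nat.div_le_self t p).trans_lt ht.1, by omega⟩
  · exact fun k _ => Nat.mul_div_cancel_left k hp0
  · simp only [Finset.mem_filter]
    exact fun t ht => Nat.mul_div_cancel' ht.2
  · intro k _
    rw [Nat.mul_div_cancel_left _ hp0, coeff_expSeries, coeff_expSeries, neg_pow π k, pow_add,
      div_mul_div_comm]
    ring

/-- The coefficients `b_z` of Dwork's series, extended by `0` to negative `z`. -/
noncomputable def dworkBInt (p : ℕ) (π : K) (z : ℤ) : K :=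
  if 0 ≤ z then dworkB p π z.toNat else 0

theorem dworkBInt_natCast (p : ℕ) (π : K) (i : ℕ) :
    dworkBInt p π i = dworkB p π i := by
  simp [dworkBInt]

theorem dworkBInt_of_neg (p : ℕ) (π : K) {z : ℤ} (hz : z < 0) :
    dworkBInt p π z = 0 :=
  if_neg hz.not_ge

theorem coeff_X_pow_mul_dworkSeries {p : ℕ} (hp : p ≠ 0) (π : K) (k i : ℕ) :
    coeff i (X ^ k * dworkSeries p hp π) = dworkBInt p π (i - k) := by
  rw [coeff_X_pow_mul', coeff_dworkSeries]
  split_ifs with h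
  · rw [← Nat.cast_sub h, dworkBInt_natCast]
  · exact (dworkBInt_of_neg p π (by omega)).symm

variable [CharZero K]

theorem expSeries_eq_rescale_exp (c : K) : expSeries c = rescale c (exp K) := by
  ext j
  simp [coeff_expSeries, coeff_exp, div_eq_mul_inv]

theorem expSeries_add (a c : K) : expSeries (a + c) = expSeries a * expSeries c := by
  simp only [expSeries_eq_rescale_exp, exp_mul_exp_eq_exp_add]

theorem expSeries_natCast_mul (m : ℕ) (c : K) : expSeries (m * c) = expSeries c ^ m := by
  induction m with
  | zero => simp [expSeries_zero]
  | succ m ih => rw [Nat.cast_succ, add_mul, one_mul, expSeries_add, ih, pow_succ]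

theorem derivative_expSeries (c : K) : derivative K (expSeries c) = C c * expSeries c := by
  ext j
  have := Nat.cast_add_one_ne_zero (R := K) j
  have := Nat.cast_ne_zero (R := K).2 j.factorial_ne_zero
  rw [coeff_derivative, coeff_C_mul, coeff_expSeries, coeff_expSeries, Nat.factorial_succ]
  push_cast
  field_simp
  ring

theorem dworkSeries_mul_expand_expSeries {p : ℕ} (hp : p ≠ 0) (π : K) :
    dworkSeries p hp π * expand p hp (expSeries π) = expSeries π := by
  rw [dworkSeries, mul_assoc, ← map_mul, ← expSeries_add, neg_add_cancel, expSeries_zero, map_one,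
    mul_one]

theorem sum_antidiagonal_dworkB_mul {p : ℕ} (hp : p ≠ 0) (π : K) (i : ℕ) :
    ∑ x ∈ antidiagonal i, dworkB p π x.1 * coeff x.2 (expand p hp (expSeries π)) =
      π ^ i / (i.factorial : K) := by
  have h := congrArg (coeff i) (dworkSeries_mul_expand_expSeries hp π)
  simpa only [coeff_mul, coeff_dworkSeries, coeff_expSeries π i] using h

theorem derivative_dworkSeries {p : ℕ} (hp : p ≠ 0) (π : K) :
    derivative K (dworkSeries p hp π) =
      C π * dworkSeries p hp π - C (p * π) * (X ^ (p - 1) * dworkSeries p hp π) := by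
  rw [dworkSeries, Derivation.leibniz, derivative_expand, derivative_expSeries,
    derivative_expSeries, map_mul (expand p hp), expand_C, map_mul C, map_neg C, map_natCast]
  simp only [smul_eq_mul]
  ring

theorem intCast_mul_dworkBInt {p : ℕ} (hp : p ≠ 0) (π : K) (z : ℤ) :
    z * dworkBInt p π z = π * dworkBInt p π (z - 1) - p * π * dworkBInt p π (z - p) := by
  rcases lt_or_ge z 0 with hz | hz
  · rw [dworkBInt_of_neg p π hz, dworkBInt_of_neg p π (by omega), dworkBInt_of_neg p π (by omega)]
    ring
  lift z to ℕ using hz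
  rcases z with _ | i
  · simp [dworkBInt, hp]
  · have h := congrArg (coeff i) (derivative_dworkSeries hp π)
    rw [coeff_derivative, map_sub, coeff_C_mul, coeff_C_mul, coeff_X_pow_mul_dworkSeries,
      coeff_dworkSeries, coeff_dworkSeries, Nat.cast_pred (Nat.pos_of_ne_zero hp)] at h
    rw [dworkBInt_natCast, Nat.cast_succ, add_sub_cancel_right, dworkBInt_natCast,
      show (i : ℤ) + 1 - p = i - (p - 1) by ring, ← h]
    push_cast
    ring

end DworkSeries

theorem exists_sum_pow_prime_eq {R ι : Type*} [CommSemiring R] {p : ℕ} (hp : p.Prime)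
    (s : Finset ι) (x : ι → R) : ∃ r, (∑ i ∈ s, x i) ^ p = ∑ i ∈ s, x i ^ p + p * r := by
  induction s using Finset.cons_induction with
  | empty => exact ⟨0, by simp [hp.ne_zero]⟩
  | cons i s hi ih =>
    obtain ⟨r, hr⟩ := ih
    obtain ⟨r', hr'⟩ := exists_add_pow_prime_eq hp (x i) (∑ j ∈ s, x j)
    refine ⟨r + x i * (∑ j ∈ s, x j) * r', ?_⟩
    rw [Finset.sum_cons, Finset.sum_cons, hr', hr]
    ring

theorem coeff_pow_of_X_pow_dvd_sub {R : Type*} [CommRing R] {f g : R⟦X⟧} {n : ℕ} (hn : n ≠ 0)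
    (h : X ^ n ∣ f - g) (hg : constantCoeff g = 1) (m : ℕ) :
    coeff n (f ^ m) = coeff n (g ^ m) + m * coeff n (f - g) := by
  obtain ⟨d, hd⟩ := h
  obtain ⟨k, hk⟩ := Polynomial.powAddExpansion g (X ^ n * d) m
  have hlinear : coeff n ((m : R⟦X⟧) * g ^ (m - 1) * (X ^ n * d)) =
      (m : R) * coeff n (X ^ n * d) := by
    rw [mul_left_comm, coeff_X_pow_mul', coeff_X_pow_mul']
    simp [hg]
  have hsquare : coeff n (k * (X ^ n * d) ^ 2) = 0 := by
    rw [show k * (X ^ n * d) ^ 2 = X ^ (n * 2) * (k * d ^ 2) by ring, coeff_X_pow_mul',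
      if_neg (by omega)]
  rw [hd, ← hlinear, ← sub_add_cancel f g, hd, add_comm _ g, hk, map_add, map_add, hsquare,
    add_zero]

theorem coeff_expand_mul_of_X_pow_dvd_sub {R : Type*} [CommRing R] {f g : R⟦X⟧} {n p : ℕ}
    (hn : n ≠ 0) (hp : 1 < p) (h : X ^ n ∣ f - g) (e : R⟦X⟧) :
    coeff n (expand p (by omega) f * e) = coeff n (expand p (by omega) g * e) := by
  obtain ⟨d, hd⟩ := h
  have hlt : n < p * n := lt_mul_of_one_lt_left (Nat.pos_of_ne_zero hn) hp
  rw [eq_add_of_sub_eq hd, map_add (expand p _), map_mul (expand p _), map_pow, expand_X, ← pow_mul,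
    add_mul, mul_assoc, map_add, coeff_X_pow_mul', if_neg hlt.not_ge, zero_add]

section Weight

/-- A weight: the coefficients of a power series are allowed to grow like `W`, and this growth
condition is stable under multiplication. -/
structure IsWeight (W : ℕ → ℝ) : Prop where
  one_le : ∀ n, 1 ≤ W n
  mul_le : ∀ m n, W m * W n ≤ W (m + n)

variable {W : ℕ → ℝ}

theorem IsWeight.nonneg (hW : IsWeight W) (n : ℕ) : 0 ≤ W n :=
  zero_le_one.trans (hW.one_le n)

theorem IsWeight.monotone (hW : IsWeight W) : Monotone W := by
  intro m n h
  obtain ⟨k, rfl⟩ := Nat.exists_eq_add_of_le h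
  exact (le_mul_of_one_le_right (hW.nonneg m) (hW.one_le k)).trans (hW.mul_le m k)

variable {K : Type*} [NormedField K] [IsUltrametricDist K]

/-- The ring of power series `∑ cₙ tⁿ` with `‖cₙ‖ ≤ W n`. -/
def weightSubring (K : Type*) [NormedField K] [IsUltrametricDist K] (hW : IsWeight W) :
    Subring K⟦X⟧ where
  carrier := {f | ∀ n, ‖coeff n f‖ ≤ W n}
  zero_mem' n := by simpa using hW.nonneg n
  one_mem' n := by
    rw [coeff_one]
    split_ifs
    · simpa using hW.one_le n
    · simpa using hW.nonneg n
  add_mem' hf hg n := (IsUltrametricDist.norm_add_le_max _ _).trans (max_le (hf n) (hg n))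
  neg_mem' hf n := by simpa using hf n
  mul_mem' {f g} hf hg n := by
    rw [coeff_mul]
    refine IsUltrametricDist.norm_sum_le_of_forall_le_of_nonneg (hW.nonneg n) fun x hx => ?_
    rw [norm_mul, ← mem_antidiagonal.1 hx]
    exact (mul_le_mul (hf _) (hg _) (norm_nonneg _) (hW.nonneg _)).trans (hW.mul_le _ _)

theorem monomial_mem_weightSubring {hW : IsWeight W} {k : ℕ} {c : K} (hc : ‖c‖ ≤ W k) :
    monomial k c ∈ weightSubring K hW := by
  intro n
  rw [coeff_monomial]
  split_ifs with h
  · rwa [h]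
  · simpa using hW.nonneg n

theorem natCast_dvd_weightSubring_iff {hW : IsWeight W} {m : ℕ} (hm : (m : K) ≠ 0)
    (f : weightSubring K hW) :
    (m : weightSubring K hW) ∣ f ↔ ∀ n, ‖coeff n (f : K⟦X⟧)‖ ≤ ‖(m : K)‖ * W n := by
  have coeff_natCast_mul (g : K⟦X⟧) (n : ℕ) : coeff n ((m : K⟦X⟧) * g) = m * coeff n g := by
    rw [← map_natCast C, coeff_C_mul]
  constructor
  · rintro ⟨g, rfl⟩ n
    rw [Subring.coe_mul, Subring.coe_natCast, coeff_natCast_mul, norm_mul]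
    exact mul_le_mul_of_nonneg_left (g.2 n) (norm_nonneg _)
  · intro h
    refine ⟨⟨C (m : K)⁻¹ * f, fun n => ?_⟩, Subtype.ext ?_⟩
    · rw [coeff_C_mul, norm_mul, norm_inv, inv_mul_le_iff₀ (norm_pos_iff.2 hm)]
      exact h n
    · ext n
      rw [Subring.coe_mul, Subring.coe_natCast, coeff_natCast_mul, coeff_C_mul,
        mul_inv_cancel_left₀ hm]

theorem natCast_dvd_monomial_sub_monomial_pow {hW : IsWeight W} {m k : ℕ} {c : K}
    (hm : (m : K) ≠ 0) (h : monomial k c ∈ weightSubring K hW)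
    (h' : monomial (m * k) c ∈ weightSubring K hW)
    (hc : ‖c - c ^ m‖ ≤ ‖(m : K)‖ * W (m * k)) :
    (m : weightSubring K hW) ∣
      (⟨monomial (m * k) c, h'⟩ : weightSubring K hW) - ⟨monomial k c, h⟩ ^ m := by
  refine (natCast_dvd_weightSubring_iff hm _).2 fun i => ?_
  rw [AddSubgroupClass.coe_sub, Subring.coe_pow, monomial_pow, ← map_sub, coeff_monomial]
  split_ifs with hi
  · rwa [hi]
  · simpa using mul_nonneg (norm_nonneg _) (hW.nonneg i)

end Weight

theorem natCast_dvd_sum_mul_sub_sum_pow {R ι : Type*} [CommRing R] {p : ℕ} (hp : p.Prime)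
    {s : Finset ι} {x y : ι → R} {e : R} (hxy : ∀ i ∈ s, (p : R) ∣ y i - x i ^ p)
    (he : (p : R) ∣ e - 1) : (p : R) ∣ (∑ i ∈ s, y i) * e - (∑ i ∈ s, x i) ^ p := by
  obtain ⟨r, hr⟩ := exists_sum_pow_prime_eq hp s x
  have hsum : (p : R) ∣ ∑ i ∈ s, y i - ∑ i ∈ s, x i ^ p := by
    rw [← Finset.sum_sub_distrib]
    exact Finset.dvd_sum hxy
  rw [hr, show (∑ i ∈ s, y i) * e - (∑ i ∈ s, x i ^ p + p * r) =
    (∑ i ∈ s, y i) * (e - 1) + (∑ i ∈ s, y i - ∑ i ∈ s, x i ^ p) - p * r by ring]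
  exact dvd_sub (dvd_add (he.mul_left _) hsum) (dvd_mul_right _ _)

section PadicNorm

variable (p : ℕ) [Fact p.Prime] {K : Type*} [NormedField K] [NormedAlgebra ℚ_[p] K]

include p

theorem norm_natCast_eq_norm_padic (m : ℕ) : ‖(m : K)‖ = ‖(m : ℚ_[p])‖ := by
  rw [← map_natCast (algebraMap ℚ_[p] K), norm_algebraMap']

theorem norm_natCast_le_one (m : ℕ) : ‖(m : K)‖ ≤ 1 := by
  rw [norm_natCast_eq_norm_padic p]
  exact IsUltrametricDist.norm_natCast_le_one ℚ_[p] m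

theorem norm_prime : ‖(p : K)‖ = (p : ℝ)⁻¹ := by
  rw [norm_natCast_eq_norm_padic p, Padic.norm_p]

variable (K) in
theorem charZero_of_padic : CharZero K :=
  charZero_of_injective_algebraMap (algebraMap ℚ_[p] K).injective

variable (K) in
theorem isUltrametricDist_of_padic : IsUltrametricDist K :=
  IsUltrametricDist.isUltrametricDist_of_forall_norm_natCast_le_one (norm_natCast_le_one p)

theorem norm_factorial (j : ℕ) :
    ‖(j.factorial : K)‖ = ((p : ℝ) ^ padicValNat p j.factorial)⁻¹ := by
  rw [norm_natCast_eq_norm_padic p, Padic.norm_eq_zpow_neg_valuation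
    (Nat.cast_ne_zero.2 j.factorial_ne_zero), Padic.valuation_natCast, zpow_neg, zpow_natCast]

theorem norm_factorial_of_lt {j : ℕ} (hj : j < p) : ‖(j.factorial : K)‖ = 1 := by
  rw [norm_factorial p, padicValNat.eq_zero_of_not_dvd
    (mt (Fact.out : p.Prime).dvd_factorial.1 hj.not_ge), pow_zero, inv_one]

theorem norm_inv_sub_inv_pow_le {m : ℕ} (hm : ‖(m : K)‖ = 1) :
    ‖(m : K)⁻¹ - (m : K)⁻¹ ^ p‖ ≤ ‖(p : K)‖ := by
  have hm0 : (m : K) ≠ 0 := norm_ne_zero_iff.1 (by rw [hm]; exact one_ne_zero)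
  obtain ⟨d, hd⟩ : (p : ℤ) ∣ (m : ℤ) ^ p - m := by
    rw [← ZMod.intCast_zmod_eq_zero_iff_dvd]
    simp
  have hfermat : (m : K) ^ p - m = p * (d : K) := by
    simpa using congrArg (Int.cast : ℤ → K) hd
  have hd1 : ‖(d : K)‖ ≤ 1 := by
    rw [← map_intCast (algebraMap ℚ_[p] K), norm_algebraMap']
    exact Padic.norm_int_le_one d
  rw [inv_pow, inv_sub_inv hm0 (pow_ne_zero _ hm0), hfermat, norm_div, norm_mul, norm_mul, norm_pow,
    hm, one_pow, mul_one, div_one]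
  exact mul_le_of_le_one_right (norm_nonneg _) hd1

end PadicNorm

section ExpAddPow

variable {K : Type*} [Field K] {p : ℕ}

/-- The series `exp(t + t^p/p)`, from which Dwork's series arises by rescaling `t` by `π`. -/
noncomputable def expAddPow (K : Type*) [Field K] (hp : p ≠ 0) : K⟦X⟧ :=
  expSeries 1 * expand p hp (expSeries (p : K)⁻¹)

theorem expAddPow_pow [CharZero K] (hp : p ≠ 0) :
    expAddPow K hp ^ p = expand p hp (expAddPow K hp) *
      (expSeries (p : K) * expand (p * p) (mul_ne_zero hp hp) (expSeries (-(p : K)⁻¹))) := by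
  have hpow (c : K) : expSeries c ^ p = expSeries (p * c) := (expSeries_natCast_mul p c).symm
  have hcancel : expand (p * p) (mul_ne_zero hp hp) (expSeries (p : K)⁻¹) *
      expand (p * p) (mul_ne_zero hp hp) (expSeries (-(p : K)⁻¹)) = 1 := by
    rw [← map_mul, ← expSeries_add, add_neg_cancel, expSeries_zero, map_one]
  rw [expAddPow, mul_pow, ← map_pow, hpow, hpow, mul_inv_cancel₀ (Nat.cast_ne_zero.2 hp), mul_one,
    map_mul, ← expand_mul p hp p hp]
  linear_combination -(expSeries (p : K) * expand p hp (expSeries 1)) * hcancel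

theorem coeff_expAddPow_of_lt (hp : p ≠ 0) {k : ℕ} (hk : k < p) :
    coeff k (expAddPow K hp) = (k.factorial : K)⁻¹ := by
  rw [expAddPow, coeff_mul, Finset.sum_eq_single (k, 0)]
  · simp [coeff_expSeries, constantCoeff_expSeries]
  · rintro ⟨i, j⟩ hij hne
    rw [mem_antidiagonal] at hij
    have hj : ¬p ∣ j := fun h => by
      have hj0 := Nat.eq_zero_of_dvd_of_lt h (by omega)
      exact hne (by simp [← hij, hj0])
    rw [coeff_expand_of_not_dvd p hp _ hj, mul_zero]
  · simp

end ExpAddPow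

theorem X_pow_dvd_sum_monomial_sub {R : Type*} [CommRing R] (f : R⟦X⟧) (n : ℕ) :
    X ^ n ∣ ∑ k : Fin n, monomial (k : ℕ) (coeff k f) - f := by
  refine X_pow_dvd_iff.2 fun m hm => ?_
  rw [map_sub, map_sum, Finset.sum_eq_single ⟨m, hm⟩]
  · simp
  · intro k _ hk
    rw [coeff_monomial, if_neg fun h => hk (Fin.ext h.symm)]
  · simp

theorem natCast_mul_coeff_of_pow_eq_expand_mul {R : Type*} [CommRing R] {f e : R⟦X⟧} {p n : ℕ}
    (hp : 1 < p) (hn : n ≠ 0) (hf : constantCoeff f = 1)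
    (hpow : f ^ p = expand p (by omega) f * e) :
    (p : R) * coeff n f =
      coeff n ((∑ k : Fin n, monomial (p * k) (coeff k f)) * e -
        (∑ k : Fin n, monomial (k : ℕ) (coeff k f)) ^ p) := by
  have hdvd := X_pow_dvd_sum_monomial_sub f n
  have htail : coeff n (∑ k : Fin n, monomial (k : ℕ) (coeff k f) - f) = -coeff n f := by
    rw [map_sub, map_sum, Finset.sum_eq_zero, zero_sub]
    exact fun k _ => by rw [coeff_monomial, if_neg k.2.ne']
  have hexpand := coeff_expand_mul_of_X_pow_dvd_sub hn hp hdvd e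
  rw [map_sum] at hexpand
  simp only [expand_monomial] at hexpand
  rw [map_sub, coeff_pow_of_X_pow_dvd_sub hn hdvd hf, htail, hexpand, hpow]
  ring

section DworkEstimate

/-- The weight `q ^ max(0, (2p-1)n - p²)`, through the truncated subtraction of `ℕ`. For
`q ^ (p²(p-1)) = p` it bounds the `n`-th coefficient of `exp(t + t^p/p)`. -/
def dworkWeight (p : ℕ) (q : ℝ) (n : ℕ) : ℝ :=
  q ^ ((2 * p - 1) * n - p ^ 2)

theorem isWeight_dworkWeight (p : ℕ) {q : ℝ} (hq : 1 ≤ q) : IsWeight (dworkWeight p q) where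
  one_le n := one_le_pow₀ hq
  mul_le m n := by
    rw [dworkWeight, dworkWeight, dworkWeight, ← pow_add]
    refine pow_le_pow_right₀ hq ?_
    rw [mul_add]
    omega

variable (p : ℕ) [hp : Fact p.Prime] {q : ℝ}

theorem prime_mul_dworkWeight_pow_le (hq : 1 ≤ q) (hqp : q ^ (p ^ 2 * (p - 1)) = p) {k : ℕ}
    (hk : p ≤ k) : p * dworkWeight p q k ^ p ≤ dworkWeight p q (p * k) := by
  have hp1 := hp.out.one_le
  rw [← hqp, dworkWeight, dworkWeight, ← pow_mul, ← pow_add]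
  refine pow_le_pow_right₀ hq (Nat.le_sub_of_add_le ?_)
  have hslope : p ^ 2 ≤ (2 * p - 1) * k := by
    rw [pow_two]
    exact Nat.mul_le_mul (by omega) hk
  zify [hp1, hslope, show 1 ≤ 2 * p by omega]
  ring_nf
  rfl

variable {K : Type*} [NormedField K] [NormedAlgebra ℚ_[p] K]

theorem norm_inv_factorial_le (hq : 1 ≤ q) (hqp : q ^ (p ^ 2 * (p - 1)) = p) {j : ℕ}
    (hj : j ≠ 0) : ‖(j.factorial : K)⁻¹‖ ≤ q ^ (p ^ 2 * (j - 1)) := by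
  rw [norm_inv, norm_factorial p, inv_inv, ← hqp, ← pow_mul, mul_assoc]
  have := sub_one_mul_padicValNat_factorial_lt_of_ne_zero p hj
  exact pow_le_pow_right₀ hq (Nat.mul_le_mul_left _ (by omega))

theorem norm_coeff_expSeries_prime_le (hq : 1 ≤ q) (hqp : q ^ (p ^ 2 * (p - 1)) = p) {j : ℕ}
    (hj : j ≠ 0) : ‖coeff j (expSeries (p : K))‖ ≤ ‖(p : K)‖ * dworkWeight p q j := by
  obtain ⟨i, rfl⟩ := Nat.exists_eq_succ_of_ne_zero hj
  have hp0 : (0 : ℝ) < p := mod_cast hp.out.pos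
  have hq_le : q ^ p ^ 2 ≤ p := by
    rw [← hqp]
    exact pow_le_pow_right₀ hq (Nat.le_mul_of_pos_right _ (Nat.sub_pos_of_lt hp.out.one_lt))
  calc ‖coeff (i + 1) (expSeries (p : K))‖
      = (p : ℝ)⁻¹ * ((p : ℝ)⁻¹ ^ i * ‖((i + 1).factorial : K)⁻¹‖) := by
        rw [coeff_expSeries, div_eq_mul_inv, norm_mul, norm_pow, norm_prime p, pow_succ']
        ring
    _ ≤ (p : ℝ)⁻¹ * ((p : ℝ)⁻¹ ^ i * (p : ℝ) ^ i) := by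
        gcongr
        refine (norm_inv_factorial_le p hq hqp hj).trans ?_
        rw [Nat.succ_sub_one, pow_mul]
        exact pow_le_pow_left₀ (by positivity) hq_le i
    _ = ‖(p : K)‖ := by
        rw [← mul_pow, inv_mul_cancel₀ hp0.ne', one_pow, mul_one, norm_prime p]
    _ ≤ ‖(p : K)‖ * dworkWeight p q (i + 1) :=
        le_mul_of_one_le_right (norm_nonneg _) ((isWeight_dworkWeight p hq).one_le _)

theorem norm_coeff_expSeries_neg_inv_prime_le (hq : 1 ≤ q) (hqp : q ^ (p ^ 2 * (p - 1)) = p)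
    {j : ℕ} (hj : j ≠ 0) :
    ‖coeff j (expSeries (-(p : K)⁻¹))‖ ≤ ‖(p : K)‖ * dworkWeight p q (p * p * j) := by
  obtain ⟨i, rfl⟩ := Nat.exists_eq_succ_of_ne_zero hj
  have hp0 : (0 : ℝ) < p := mod_cast hp.out.pos
  have hexponent : p ^ 2 * (p - 1) * (i + 2) + p ^ 2 * i ≤
      (2 * p - 1) * (p * p * (i + 1)) - p ^ 2 := by
    obtain ⟨d, hd⟩ := Nat.exists_eq_add_of_le hp.out.two_le
    refine Nat.le_sub_of_add_le ?_
    rw [show p - 1 = d + 1 by omega, show 2 * p - 1 = 2 * d + 3 by omega]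
    nlinarith [Nat.zero_le (p ^ 2 * (d * i)), Nat.zero_le (p ^ 2 * i)]
  rw [norm_prime p, coeff_expSeries, div_eq_mul_inv, norm_mul, norm_pow, norm_neg, norm_inv,
    norm_prime p, inv_inv, ← div_eq_inv_mul, le_div_iff₀ hp0]
  calc (p : ℝ) ^ (i + 1) * ‖((i + 1).factorial : K)⁻¹‖ * p
      ≤ (p : ℝ) ^ (i + 1) * q ^ (p ^ 2 * i) * p := by
        gcongr
        exact norm_inv_factorial_le p hq hqp hj
    _ = q ^ (p ^ 2 * (p - 1) * (i + 2) + p ^ 2 * i) := by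
        rw [pow_add q, pow_mul q (p ^ 2 * (p - 1)), hqp]
        ring
    _ ≤ dworkWeight p q (p * p * (i + 1)) := pow_le_pow_right₀ hq hexponent

theorem exists_weightSubring_dvd_sub_one [CharZero K] [IsUltrametricDist K] {W : ℕ → ℝ}
    (hW : IsWeight W) {f : K⟦X⟧} (h0 : constantCoeff f = 1)
    (hf : ∀ n ≠ 0, ‖coeff n f‖ ≤ ‖(p : K)‖ * W n) :
    ∃ e : weightSubring K hW, (e : K⟦X⟧) = f ∧ (p : weightSubring K hW) ∣ e - 1 := by
  have hmem : f ∈ weightSubring K hW := fun n => by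
    rcases eq_or_ne n 0 with rfl | hn
    · rw [coeff_zero_eq_constantCoeff_apply, h0, norm_one]
      exact hW.one_le 0
    · exact (hf n hn).trans (mul_le_of_le_one_left (hW.nonneg n) (norm_natCast_le_one p p))
  refine ⟨⟨f, hmem⟩, rfl, (natCast_dvd_weightSubring_iff
    (Nat.cast_ne_zero.2 hp.out.ne_zero) _).2 fun n => ?_⟩
  rw [AddSubgroupClass.coe_sub, Subring.coe_one, map_sub, coeff_one]
  rcases eq_or_ne n 0 with rfl | hn
  · simpa [h0] using mul_nonneg (norm_nonneg _) (hW.nonneg 0)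
  · simpa [hn] using hf n hn

theorem exists_weightSubring_eq_expSeries_mul_expand [CharZero K] [IsUltrametricDist K]
    (hq : 1 ≤ q) (hqp : q ^ (p ^ 2 * (p - 1)) = p) :
    ∃ e : weightSubring K (isWeight_dworkWeight p hq),
      (e : K⟦X⟧) = expSeries (p : K) *
        expand (p * p) (mul_ne_zero hp.out.ne_zero hp.out.ne_zero) (expSeries (-(p : K)⁻¹)) ∧
      (p : weightSubring K (isWeight_dworkWeight p hq)) ∣ e - 1 := by
  have hpp : p * p ≠ 0 := mul_ne_zero hp.out.ne_zero hp.out.ne_zero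
  have hW := isWeight_dworkWeight p hq
  obtain ⟨e₁, he₁, hdvd₁⟩ := exists_weightSubring_dvd_sub_one p hW (f := expSeries (p : K))
    (constantCoeff_expSeries _) fun n hn => norm_coeff_expSeries_prime_le p hq hqp hn
  obtain ⟨e₂, he₂, hdvd₂⟩ := exists_weightSubring_dvd_sub_one p hW
    (f := expand (p * p) hpp (expSeries (-(p : K)⁻¹)))
    (by rw [constantCoeff_expand, constantCoeff_expSeries]) fun n hn => by
      rw [coeff_expand]
      split_ifs with h
      · obtain ⟨j, rfl⟩ := h
        rw [Nat.mul_div_cancel_left j (Nat.pos_of_ne_zero hpp)]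
        exact norm_coeff_expSeries_neg_inv_prime_le p hq hqp (right_ne_zero_of_mul hn)
      · simpa using mul_nonneg (norm_nonneg _) (hW.nonneg n)
  refine ⟨e₁ * e₂, by rw [Subring.coe_mul, he₁, he₂], ?_⟩
  rw [show e₁ * e₂ - 1 = (e₁ - 1) * e₂ + (e₂ - 1) by ring]
  exact dvd_add (hdvd₁.mul_right _) hdvd₂

theorem norm_sub_pow_le_of_norm_le (hq : 1 ≤ q) (hqp : q ^ (p ^ 2 * (p - 1)) = p) {k : ℕ}
    (hk : ‖coeff k (expAddPow K hp.out.ne_zero)‖ ≤ dworkWeight p q k) :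
    ‖coeff k (expAddPow K hp.out.ne_zero) - coeff k (expAddPow K hp.out.ne_zero) ^ p‖ ≤
      ‖(p : K)‖ * dworkWeight p q (p * k) := by
  have := isUltrametricDist_of_padic p K
  have hW := isWeight_dworkWeight p hq
  rcases lt_or_ge k p with hkp | hkp
  · rw [coeff_expAddPow_of_lt _ hkp]
    exact (norm_inv_sub_inv_pow_le p (norm_factorial_of_lt p hkp)).trans
      (le_mul_of_one_le_right (norm_nonneg _) (hW.one_le _))
  have hpow : dworkWeight p q k ^ p ≤ ‖(p : K)‖ * dworkWeight p q (p * k) := by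
    rw [norm_prime p, ← div_eq_inv_mul, le_div_iff₀' (mod_cast hp.out.pos)]
    exact prime_mul_dworkWeight_pow_le p hq hqp hkp
  rw [sub_eq_add_neg]
  refine (IsUltrametricDist.norm_add_le_max _ _).trans (max_le ?_ ?_)
  · exact hk.trans ((le_self_pow₀ (hW.one_le k) hp.out.ne_zero).trans hpow)
  · rw [norm_neg, norm_pow]
    exact (pow_le_pow_left₀ (norm_nonneg _) hk p).trans hpow

theorem norm_coeff_expAddPow_le (hq : 1 ≤ q) (hqp : q ^ (p ^ 2 * (p - 1)) = p) (n : ℕ) :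
    ‖coeff n (expAddPow K hp.out.ne_zero)‖ ≤ dworkWeight p q n := by
  have := charZero_of_padic p K
  have := isUltrametricDist_of_padic p K
  have hp0 := hp.out.ne_zero
  have hpK : (p : K) ≠ 0 := Nat.cast_ne_zero.2 hp0
  have hW := isWeight_dworkWeight p hq
  induction n using Nat.strong_induction_on with
  | _ n ih =>
  set f := expAddPow K hp0
  have hf : constantCoeff f = 1 := by simpa using coeff_expAddPow_of_lt (K := K) hp0 hp.out.pos
  rcases eq_or_ne n 0 with rfl | hn
  · rw [coeff_zero_eq_constantCoeff_apply, hf, norm_one]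
    exact hW.one_le 0
  obtain ⟨e, he, hdvd⟩ := exists_weightSubring_eq_expSeries_mul_expand p (K := K) hq hqp
  let c (k : Fin n) : weightSubring K hW :=
    ⟨monomial k (coeff k f), monomial_mem_weightSubring (ih k k.2)⟩
  let d (k : Fin n) : weightSubring K hW :=
    ⟨monomial (p * k) (coeff k f), monomial_mem_weightSubring
      ((ih k k.2).trans (hW.monotone (Nat.le_mul_of_pos_left _ hp.out.pos)))⟩
  have hcd (k : Fin n) : (p : weightSubring K hW) ∣ d k - c k ^ p :=
    natCast_dvd_monomial_sub_monomial_pow hpK _ _ (norm_sub_pow_le_of_norm_le p hq hqp (ih k k.2))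
  have hbound := (natCast_dvd_weightSubring_iff hpK _).1
    (natCast_dvd_sum_mul_sub_sum_pow hp.out (s := Finset.univ) (fun k _ => hcd k) hdvd) n
  have hcoe : ((∑ k, d k) * e - (∑ k, c k) ^ p : weightSubring K hW) =
      (∑ k : Fin n, monomial (p * k) (coeff k f)) * (e : K⟦X⟧) -
        (∑ k : Fin n, monomial (k : ℕ) (coeff k f)) ^ p := by
    simp [c, d]
  rw [hcoe, he, ← natCast_mul_coeff_of_pow_eq_expand_mul hp.out.one_lt hn hf (expAddPow_pow hp0),
    norm_mul] at hbound
  exact le_of_mul_le_mul_left hbound (norm_pos_iff.2 hpK)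

end DworkEstimate

theorem rescale_expand {R : Type*} [CommRing R] {p : ℕ} (hp : p ≠ 0) (a : R) (f : R⟦X⟧) :
    rescale a (expand p hp f) = expand p hp (rescale (a ^ p) f) := by
  ext n
  rw [coeff_rescale, coeff_expand, coeff_expand]
  split_ifs with h
  · obtain ⟨j, rfl⟩ := h
    rw [Nat.mul_div_cancel_left j (Nat.pos_of_ne_zero hp), coeff_rescale, pow_mul]
  · exact mul_zero _

theorem dworkSeries_eq_rescale_expAddPow {K : Type*} [Field K] [CharZero K] {p : ℕ} (hp : p ≠ 0)
    {π : K} (hπ : π ^ (p - 1) = -(p : K)) :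
    dworkSeries p hp π = rescale π (expAddPow K hp) := by
  have hπp : π ^ p * (p : K)⁻¹ = -π := by
    rw [← pow_sub_one_mul hp, hπ, mul_right_comm, neg_mul, mul_inv_cancel₀ (Nat.cast_ne_zero.2 hp),
      neg_one_mul]
  rw [dworkSeries, expAddPow, map_mul, rescale_expand, rescale_expSeries, rescale_expSeries,
    mul_one, hπp]

section DworkBound

variable {p : ℕ} [hp : Fact p.Prime] {K : Type*} [NormedField K] [NormedAlgebra ℚ_[p] K] {π : K}

theorem norm_pow_prime_sub_one (hπ : π ^ (p - 1) = -(p : K)) : ‖π‖ ^ (p - 1) = (p : ℝ)⁻¹ := by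
  rw [← norm_pow, hπ, norm_neg, norm_prime p]

theorem norm_pos_of_pow_prime_sub_one (hπ : π ^ (p - 1) = -(p : K)) : 0 < ‖π‖ := by
  refine (norm_nonneg π).lt_of_ne' fun h => ?_
  have := norm_pow_prime_sub_one hπ
  rw [h, zero_pow (Nat.sub_pos_of_lt hp.out.one_lt).ne', zero_eq_inv] at this
  exact hp.out.ne_zero (mod_cast this.symm)

theorem norm_dworkB_le (hπ : π ^ (p - 1) = -(p : K)) {q : ℝ} (hq : 1 ≤ q)
    (hqp : q ^ (p ^ 2 * (p - 1)) = p) (i : ℕ) :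
    ‖dworkB p π i‖ ≤ (‖π‖ * q ^ (2 * p - 1)) ^ i := by
  have := charZero_of_padic p K
  rw [← coeff_dworkSeries hp.out.ne_zero, dworkSeries_eq_rescale_expAddPow hp.out.ne_zero hπ,
    coeff_rescale, norm_mul, norm_pow, mul_pow, ← pow_mul]
  exact mul_le_mul_of_nonneg_left ((norm_coeff_expAddPow_le p hq hqp i).trans
    (pow_le_pow_right₀ hq (Nat.sub_le _ _))) (by positivity)

-- `r` is the reciprocal radius of convergence of `θ`, of `p`-adic order `(p-1)/p²`, while `π` has
-- order `1/(p-1)`.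
theorem exists_pow_lt_norm_and_norm_dworkB_le (hp2 : p ≠ 2) (hπ : π ^ (p - 1) = -(p : K)) :
    ∃ r : ℝ, 0 < r ∧ r ^ p < ‖π‖ ∧ ∀ i, ‖dworkB p π i‖ ≤ r ^ i := by
  obtain ⟨d, hd⟩ := Nat.exists_eq_add_of_le (hp.out.two_le.lt_of_ne' hp2)
  have hp1 : p - 1 ≠ 0 := by omega
  have hexp : p ^ 2 * (p - 1) ≠ 0 := mul_ne_zero (pow_ne_zero 2 hp.out.ne_zero) hp1
  set q : ℝ := (p : ℝ) ^ (((p ^ 2 * (p - 1) : ℕ) : ℝ)⁻¹)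
  have hq1 : 1 < q := Real.one_lt_rpow (mod_cast hp.out.one_lt) (by positivity)
  have hqp : q ^ (p ^ 2 * (p - 1)) = p := Real.rpow_inv_natCast_pow (Nat.cast_nonneg p) hexp
  have hπq : ‖π‖ * q ^ p ^ 2 = 1 := by
    refine (pow_eq_one_iff_of_nonneg (by positivity) hp1).1 ?_
    rw [mul_pow, norm_pow_prime_sub_one hπ, ← pow_mul, hqp,
      inv_mul_cancel₀ (Nat.cast_ne_zero.2 hp.out.ne_zero)]
  have hπ0 := norm_pos_of_pow_prime_sub_one hπ
  refine ⟨‖π‖ * q ^ (2 * p - 1), by positivity, ?_, norm_dworkB_le hπ hq1.le hqp⟩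
  refine lt_of_mul_lt_mul_right (a := q ^ (p ^ 2 * p)) ?_ (by positivity)
  calc (‖π‖ * q ^ (2 * p - 1)) ^ p * q ^ (p ^ 2 * p)
      = (‖π‖ * q ^ p ^ 2) ^ p * q ^ ((2 * p - 1) * p) := by ring
    _ = q ^ ((2 * p - 1) * p) := by rw [hπq, one_pow, one_mul]
    _ < q ^ (p ^ 2 * (p - 1)) := pow_lt_pow_right₀ hq1 (by
        rw [show p - 1 = d + 2 by omega, show 2 * p - 1 = 2 * d + 5 by omega, hd]
        nlinarith)
    _ = ‖π‖ * q ^ p ^ 2 * q ^ (p ^ 2 * (p - 1)) := by rw [hπq, one_mul]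
    _ = ‖π‖ * q ^ (p ^ 2 * p) := by
        rw [mul_assoc, ← pow_add, ← mul_one_add, Nat.add_sub_of_le hp.out.one_le]

end DworkBound

theorem hasSum_sub_succ {E : Type*} [NormedAddCommGroup E] {f : ℕ → E}
    (hf : Summable fun l => ‖f l‖) : HasSum (fun l => f l - f (l + 1)) (f 0) := by
  have hsub : Summable fun l => ‖f l - f (l + 1)‖ :=
    (hf.add ((summable_nat_add_iff 1).2 hf)).of_nonneg_of_le (fun _ => norm_nonneg _)
      fun _ => norm_sub_le _ _
  rw [hasSum_iff_tendsto_nat_of_summable_norm hsub]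
  simp only [Finset.sum_range_sub']
  simpa using tendsto_const_nhds.sub (tendsto_zero_iff_norm_tendsto_zero.2 hf.tendsto_atTop_zero)

section ResidueIdentity

variable {K : Type*} [NormedField K] [IsUltrametricDist K] {p : ℕ} {π : K} {r : ℝ}

/-- The coefficient of `t^(-1-l)` in the series `G(t) = ∑ (-1)^l l! (πt)^(-1-l)`. -/
noncomputable def gCoeff {K : Type*} [Field K] (π : K) (l : ℕ) : K :=
  (-1) ^ l * (l.factorial : K) / π ^ (l + 1)

omit [IsUltrametricDist K] in
theorem mul_gCoeff_succ (hπ : π ≠ 0) (l : ℕ) :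
    π * gCoeff π (l + 1) = -((l + 1) * gCoeff π l) := by
  rw [gCoeff, gCoeff, Nat.factorial_succ]
  push_cast
  field_simp
  ring

theorem norm_gCoeff_le (π : K) (l : ℕ) : ‖gCoeff π l‖ ≤ ‖π‖⁻¹ * ‖π‖⁻¹ ^ l := by
  rw [gCoeff, norm_div, norm_mul, norm_pow, norm_neg, norm_one, one_pow, one_mul, norm_pow,
    ← pow_succ', inv_pow]
  exact (div_eq_mul_inv _ _).trans_le
    (mul_le_of_le_one_left (by positivity) (IsUltrametricDist.norm_natCast_le_one K _))

omit [IsUltrametricDist K] in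
theorem norm_dworkBInt_le (hr : 0 < r) (hb : ∀ i, ‖dworkB p π i‖ ≤ r ^ i) (z : ℤ) :
    ‖dworkBInt p π z‖ ≤ r ^ z := by
  rcases lt_or_ge z 0 with hz | hz
  · rw [dworkBInt_of_neg p π hz, norm_zero]
    positivity
  · lift z to ℕ using hz
    rw [dworkBInt_natCast, zpow_natCast]
    exact hb z

theorem summable_norm_gCoeff_mul_dworkBInt (hr : 0 < r) (hrπ : r ^ p < ‖π‖)
    (hb : ∀ i, ‖dworkB p π i‖ ≤ r ^ i) (k : ℕ) :
    Summable fun l : ℕ => ‖gCoeff π l * dworkBInt p π (p * l - k)‖ := by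
  have hπ : 0 < ‖π‖ := (pow_pos hr p).trans hrπ
  have hgeom : Summable fun l : ℕ => ‖π‖⁻¹ * r ^ (-k : ℤ) * (r ^ p / ‖π‖) ^ l :=
    (summable_geometric_of_lt_one (by positivity) ((div_lt_one hπ).2 hrπ)).mul_left _
  refine hgeom.of_nonneg_of_le (fun _ => norm_nonneg _) fun l => ?_
  calc ‖gCoeff π l * dworkBInt p π (p * l - k)‖
      ≤ (‖π‖⁻¹ * ‖π‖⁻¹ ^ l) * r ^ ((p : ℤ) * l - k) := by
        rw [norm_mul]
        exact mul_le_mul (norm_gCoeff_le π l) (norm_dworkBInt_le hr hb _) (norm_nonneg _)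
          (by positivity)
    _ = ‖π‖⁻¹ * r ^ (-k : ℤ) * (r ^ p / ‖π‖) ^ l := by
        rw [sub_eq_add_neg, zpow_add₀ hr.ne', zpow_mul, zpow_natCast, zpow_natCast, div_pow,
          div_eq_mul_inv, inv_pow]
        ring

variable [CharZero K]

omit [IsUltrametricDist K] in
theorem mul_gCoeff_mul_dworkBInt (hp : p ≠ 0) (hπ : π ≠ 0) (l k : ℕ) :
    π * (gCoeff π l * dworkBInt p π (p * (l + 1) - (k + 1))) =
      -(k * (gCoeff π l * dworkBInt p π (p * (l + 1) - k))) +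
        p * π * (gCoeff π l * dworkBInt p π (p * l - k) -
          gCoeff π (l + 1) * dworkBInt p π (p * (l + 1 : ℕ) - k)) := by
  have h := intCast_mul_dworkBInt hp π (p * (l + 1) - k)
  rw [show (p : ℤ) * (l + 1) - k - 1 = p * (l + 1) - (k + 1) by ring,
    show (p : ℤ) * (l + 1) - k - p = p * l - k by ring] at h
  have hg := mul_gCoeff_succ hπ l
  push_cast at h ⊢
  linear_combination -gCoeff π l * h + p * dworkBInt p π (p * (l + 1) - k) * hg

-- Multiplying the sum for `k` by `π` reduces it to the sum for `k - 1`, up to a telescoping series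
-- that contributes only its initial term, and this only for `k = 0`.
theorem hasSum_gCoeff_mul_dworkBInt (hp : p ≠ 0) (hr : 0 < r) (hrπ : r ^ p < ‖π‖)
    (hb : ∀ i, ‖dworkB p π i‖ ≤ r ^ i) (k : ℕ) :
    HasSum (fun l : ℕ => gCoeff π l * dworkBInt p π (p * (l + 1) - (k + 1)))
      (p * gCoeff π k) := by
  have hπ : π ≠ 0 := norm_pos_iff.1 ((pow_pos hr p).trans hrπ)
  have step (k : ℕ) {s : K} (hs : HasSum
      (fun l : ℕ => k * (gCoeff π l * dworkBInt p π (p * (l + 1) - k))) s) :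
      HasSum (fun l : ℕ => π * (gCoeff π l * dworkBInt p π (p * (l + 1) - (k + 1))))
        (-s + p * π * (gCoeff π 0 * dworkBInt p π (-k))) := by
    have htelescope := hasSum_sub_succ (summable_norm_gCoeff_mul_dworkBInt hr hrπ hb k)
    simp only [mul_gCoeff_mul_dworkBInt hp hπ]
    simpa using hs.neg.add (htelescope.mul_left (p * π : K))
  rw [← hasSum_mul_left_iff hπ]
  induction k with
  | zero =>
    convert step 0 (s := 0) (by simp [hasSum_zero]) using 1
    have hzero : dworkBInt p π (-(0 : ℕ)) = 1 := by simp [dworkBInt, dworkB]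
    rw [hzero]
    ring
  | succ k ih =>
    convert step (k + 1) (s := (k + 1) * (p * gCoeff π k)) ?_ using 1
    · rw [dworkBInt_of_neg p π (by omega)]
      linear_combination p * mul_gCoeff_succ hπ k
    · have := ((hasSum_mul_left_iff hπ).1 ih).mul_left ((k : K) + 1)
      exact_mod_cast this

end ResidueIdentity

section Lattice

variable {n N : ℕ} {a : Fin (N + 1) → Fin n → ℤ}

theorem hat_zero (v : Fin n → ℤ) : hat v 0 = 1 :=
  rfl

theorem add_mem_cone {x y : Fin (n + 1) → ℝ} (hx : x ∈ cone a) (hy : y ∈ cone a) :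
    x + y ∈ cone a := by
  obtain ⟨s, hs, rfl⟩ := hx
  obtain ⟨t, ht, rfl⟩ := hy
  refine ⟨s + t, fun j => add_nonneg (hs j) (ht j), ?_⟩
  simp only [Pi.add_apply, add_smul, Finset.sum_add_distrib]

theorem smul_mem_cone {x : Fin (n + 1) → ℝ} {c : ℝ} (hc : 0 ≤ c) (hx : x ∈ cone a) :
    c • x ∈ cone a := by
  obtain ⟨s, hs, rfl⟩ := hx
  refine ⟨c • s, fun j => mul_nonneg hc (hs j), ?_⟩
  simp only [Pi.smul_apply, smul_assoc, Finset.smul_sum]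

theorem apply_zero_sum_smul_hat (t : Fin (N + 1) → ℝ) :
    (∑ j, t j • fun i => (hat (a j) i : ℝ)) 0 = ∑ j, t j := by
  simp [Finset.sum_apply, hat_zero]

theorem apply_zero_nonneg_of_mem_cone {x : Fin (n + 1) → ℝ} (hx : x ∈ cone a) : 0 ≤ x 0 := by
  obtain ⟨t, ht, rfl⟩ := hx
  rw [apply_zero_sum_smul_hat]
  exact Finset.sum_nonneg fun j _ => ht j

theorem norm_le_of_mem_cone {x : Fin (n + 1) → ℝ} (hx : x ∈ cone a) :
    ‖x‖ ≤ x 0 * ∑ j, ‖fun i => (hat (a j) i : ℝ)‖ := by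
  obtain ⟨t, ht, rfl⟩ := hx
  rw [apply_zero_sum_smul_hat, Finset.sum_mul]
  refine (norm_sum_le _ _).trans (Finset.sum_le_sum fun j _ => ?_)
  rw [norm_smul, Real.norm_of_nonneg (ht j)]
  exact mul_le_mul_of_nonneg_left (Finset.single_le_sum
    (f := fun j => ‖fun i => (hat (a j) i : ℝ)‖) (fun _ _ => norm_nonneg _) (Finset.mem_univ j))
    (ht j)

/-- The exponent `z â_0 + ∑ u_i â_i` of the monomial `(x^â_0)^z ∏ (x^â_i)^(u_i)`. -/
def hatComb (a : Fin (N + 1) → Fin n → ℤ) (z : ℤ) (u : Fin N → ℤ) : Fin (n + 1) → ℤ :=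
  z • hat (a 0) + ∑ i, u i • hat (a i.succ)

theorem hatComb_apply_zero (z : ℤ) (u : Fin N → ℤ) : hatComb a z u 0 = z + ∑ i, u i := by
  simp [hatComb, hat_zero]

theorem zsmul_hatComb_sub_hatComb (q z z' : ℤ) (u u' : Fin N → ℤ) :
    q • hatComb a z u - hatComb a z' u' = hatComb a (q * z - z') (q • u - u') := by
  simp only [hatComb, Pi.sub_apply, Pi.smul_apply, sub_smul, smul_eq_mul, mul_smul, smul_add,
    Finset.sum_sub_distrib, Finset.smul_sum]
  abel

theorem hatComb_mem_closure (z : ℤ) (u : Fin N → ℤ) :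
    hatComb a z u ∈ AddSubgroup.closure (Set.range fun j => hat (a j)) :=
  have hat_mem (j : Fin (N + 1)) :
      hat (a j) ∈ AddSubgroup.closure (Set.range fun j => hat (a j)) :=
    AddSubgroup.subset_closure (Set.mem_range_self j)
  add_mem (zsmul_mem (hat_mem 0) z) (sum_mem fun i _ => zsmul_mem (hat_mem i.succ) _)

theorem hatComb_mem_latticeM {z : ℤ} (hz : 0 ≤ z) (u : Fin N → ℕ) :
    hatComb a z (fun i => u i) ∈ latticeM a := by
  refine ⟨⟨Fin.cons (z : ℝ) fun i => (u i : ℝ), ?_, ?_⟩, hatComb_mem_closure _ _⟩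
  · exact Fin.cases (by simpa using hz) fun i => by simp
  · rw [Fin.sum_univ_succ]
    funext i
    simp [hatComb]

theorem one_le_apply_zero_of_mem_latticeMint {ρ : Fin (n + 1) → ℤ} (h : ρ ∈ latticeMint a) :
    1 ≤ ρ 0 := by
  have hnonneg : 0 ≤ ρ 0 := by exact_mod_cast apply_zero_nonneg_of_mem_cone h.1.1
  refine Int.add_one_le_of_lt (lt_of_le_of_ne hnonneg fun hzero => ?_)
  have hhat : (fun i => (hat (a 0) i : ℝ)) ∈ cone a := by
    simpa [hatComb] using (hatComb_mem_latticeM (a := a) zero_le_one 0).1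
  have hface := h.2 (LinearMap.proj 0) (fun x hx => apply_zero_nonneg_of_mem_cone hx)
    (by simp [← hzero]) _ hhat
  simp [hat_zero] at hface

theorem mem_latticeMint_of_smul_eq_add {m : ℕ} (hm : m ≠ 0) {ρ κ ν : Fin (n + 1) → ℤ}
    (hρ : ρ ∈ latticeMint a) (hκ : κ ∈ latticeM a)
    (hν : ν ∈ AddSubgroup.closure (Set.range fun j => hat (a j)))
    (h : (m : ℤ) • ν = ρ + κ) : ν ∈ latticeMint a := by
  have hreal : (m : ℝ) • (fun i => (ν i : ℝ)) = (fun i => (ρ i : ℝ)) + fun i => (κ i : ℝ) := by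
    funext i
    have := congrFun h i
    simp only [Pi.smul_apply, Pi.add_apply, smul_eq_mul] at this ⊢
    exact mod_cast this
  refine ⟨⟨?_, hν⟩, fun ℓ hℓ hzero => hρ.2 ℓ hℓ ?_⟩
  · rw [← inv_smul_smul₀ (Nat.cast_ne_zero (R := ℝ).2 hm) fun i => (ν i : ℝ), hreal]
    exact smul_mem_cone (by positivity) (add_mem_cone hρ.1.1 hκ.1)
  · have hsum := congrArg ℓ hreal
    rw [map_smul, map_add, hzero, smul_zero] at hsum
    linarith [hℓ _ hρ.1.1, hℓ _ hκ.1]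

theorem finite_latticeM_inter_apply_zero_le (B : ℕ) : {ν | ν ∈ latticeM a ∧ ν 0 ≤ B}.Finite := by
  refine (isCompact_closedBall (0 : Fin (n + 1) → ℤ)
    (B * ∑ j, ‖fun i => (hat (a j) i : ℝ)‖)).finite_of_discrete.subset ?_
  rintro ν ⟨⟨hν, -⟩, hB⟩
  rw [mem_closedBall_zero_iff]
  have hnorm : ‖ν‖ = ‖fun i => (ν i : ℝ)‖ := by
    simp only [Pi.norm_def, nnnorm, Int.norm_cast_real]
  rw [hnorm]
  exact (norm_le_of_mem_cone hν).trans (mul_le_mul_of_nonneg_right (mod_cast hB)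
    (Finset.sum_nonneg fun _ _ => norm_nonneg _))

theorem tendsto_toNat_apply_zero_cofinite :
    Tendsto (fun ν : Msub a => (ν.1 0).toNat) cofinite atTop := by
  refine tendsto_atTop.2 fun B => ?_
  rw [eventually_cofinite]
  refine ((finite_latticeM_inter_apply_zero_le (a := a) B).preimage
    Subtype.val_injective.injOn).subset fun ν hν => ?_
  exact ⟨ν.2.1, by have := not_le.1 hν; omega⟩

end Lattice

section Coefficients

variable {n N : ℕ} {a : Fin (N + 1) → Fin n → ℤ} {K : Type*} [Field K] {p : ℕ} {π : K}

theorem Bone_hatComb (z : ℤ) (u : Fin N →₀ ℕ) :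
    Bone p a π (hatComb a z fun i => u i) u = dworkBInt p π z * ∏ i, dworkB p π (u i) := by
  have hz : hatComb a z (fun i => u i) 0 - ∑ i, (u i : ℤ) = z := by
    rw [hatComb_apply_zero, add_sub_cancel_right]
  rw [Bone, hz, dworkBInt, ite_mul, zero_mul]
  exact if_congr (and_iff_left rfl) rfl rfl

theorem exists_eq_hatComb_of_Bone_ne_zero {μ : Fin (n + 1) → ℤ} {u : Fin N →₀ ℕ}
    (h : Bone p a π μ u ≠ 0) : ∃ z, 0 ≤ z ∧ μ = hatComb a z fun i => u i :=
  ⟨_, (ite_ne_right_iff.1 h).1.1, (ite_ne_right_iff.1 h).1.2.symm⟩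

/-- The exponent `ρ = (k + 1) â_0 - ∑ l_i â_i`; those with `k ≥ 0` are the ones for which `ξ_ρ`
contains the monomial `∏ (λ_i/λ_0)^(l_i)`. -/
def xiExp (a : Fin (N + 1) → Fin n → ℤ) (l : Fin N →₀ ℕ) (k : ℕ) : Fin (n + 1) → ℤ :=
  hatComb a (k + 1) fun i => -l i

theorem xiExp_apply_zero (l : Fin N →₀ ℕ) (k : ℕ) :
    xiExp a l k 0 = k + 1 - ∑ i, (l i : ℤ) := by
  rw [xiExp, hatComb_apply_zero, Finset.sum_neg_distrib, sub_eq_add_neg]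

theorem xiExp_injective (l : Fin N →₀ ℕ) : Function.Injective (xiExp a l) := fun i j h => by
  have := congrFun h 0
  rw [xiExp_apply_zero, xiExp_apply_zero] at this
  omega

theorem zsmul_xiExp_sub_xiExp (u w : Fin N →₀ ℕ) (j k : ℕ) :
    (p : ℤ) • xiExp a w j - xiExp a (u + p • w) k =
      hatComb a (p * (j + 1) - (k + 1)) fun i => u i := by
  rw [xiExp, xiExp, zsmul_hatComb_sub_hatComb]
  congr 1
  funext i
  simp only [Pi.sub_apply, Pi.smul_apply, Finsupp.add_apply, Finsupp.smul_apply, smul_eq_mul]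
  push_cast
  ring

theorem xiRho_xiExp (k : ℕ) (l : Fin N →₀ ℕ) :
    xiRho a K (xiExp a l k) l =
      (-1) ^ k * (k.factorial : K) / ∏ i, ((l i).factorial : K) := by
  have hk : xiExp a l k 0 + ∑ i, (l i : ℤ) = k + 1 := by
    rw [xiExp_apply_zero, sub_add_cancel]
  have hk' : xiExp a l k 0 - 1 + ∑ i, (l i : ℤ) = k := by
    linear_combination hk
  rw [xiRho, hk, hk', if_pos ⟨Int.natCast_nonneg k, by simp [xiExp, hatComb, sub_eq_add_neg]⟩,
    zpow_natCast, Int.toNat_natCast, Nat.cast_prod]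

theorem exists_eq_xiExp_of_xiRho_ne_zero {ρ : Fin (n + 1) → ℤ} {l : Fin N →₀ ℕ}
    (h : xiRho a K ρ l ≠ 0) : ∃ k, ρ = xiExp a l k := by
  obtain ⟨hk, hρ⟩ := (ite_ne_right_iff.1 h).1
  refine ⟨(ρ 0 - 1 + ∑ i, (l i : ℤ)).toNat, ?_⟩
  rw [xiExp, Int.toNat_of_nonneg hk, sub_add_eq_add_sub, sub_add_cancel, hatComb]
  simp only [neg_smul, Finset.sum_neg_distrib]
  rw [← sub_eq_add_neg, ← neg_sub, hρ, neg_neg]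

theorem frobR_smul (hp : p ≠ 0) (f : MvPowerSeries (Fin N) K) (w : Fin N →₀ ℕ) :
    frobR p f (p • w) = f w := by
  have h : ∃ w', p • w' = p • w := ⟨w, rfl⟩
  rw [frobR, dif_pos h, smul_right_injective (Fin N →₀ ℕ) hp h.choose_spec]

theorem exists_smul_eq_of_frobR_ne_zero {f : MvPowerSeries (Fin N) K} {v : Fin N →₀ ℕ}
    (h : frobR p f v ≠ 0) : ∃ w, p • w = v ∧ f w ≠ 0 := by
  rw [frobR] at h
  split_ifs at h with hv
  · exact ⟨_, hv.choose_spec, h⟩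
  · exact (h rfl).elim

theorem etaTerm_apply (ξ : Msub a → MvPowerSeries (Fin N) K) (ρ : Fin (n + 1) → ℤ) (ν : Msub a)
    (l : Fin N →₀ ℕ) : etaTerm p a π ξ ρ ν l = ∑ x ∈ antidiagonal l,
      π ^ (ρ 0 - ν.1 0) * (Bone p a π ((p : ℤ) • ν.1 - ρ) x.1 * frobR p (ξ ν) x.2) := by
  rw [etaTerm]
  split_ifs with h
  · rw [← Finset.mul_sum]
    exact congrArg (π ^ (ρ 0 - ν.1 0) * ·) (MvPowerSeries.coeff_mul _ _ _)
  · refine (Finset.sum_eq_zero fun x _ => ?_).symm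
    have hzero : Bone p a π ((p : ℤ) • ν.1 - ρ) x.1 = 0 := by
      by_contra hne
      obtain ⟨z, hz, hμ⟩ := exists_eq_hatComb_of_Bone_ne_zero hne
      exact h (hμ ▸ hatComb_mem_latticeM hz x.1)
    rw [hzero, zero_mul, mul_zero]

theorem exists_eq_xiExp_of_Bone_mul_frobR_ne_zero {ρ ν : Fin (n + 1) → ℤ} (hρ : 1 ≤ ρ 0)
    {u v : Fin N →₀ ℕ}
    (h : Bone p a π ((p : ℤ) • ν - ρ) u * frobR p (xiRho a K ν) v ≠ 0) :
    ∃ k, ρ = xiExp a (u + v) k := by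
  obtain ⟨z, -, hz⟩ := exists_eq_hatComb_of_Bone_ne_zero (left_ne_zero_of_mul h)
  obtain ⟨w, rfl, hw⟩ := exists_smul_eq_of_frobR_ne_zero (right_ne_zero_of_mul h)
  obtain ⟨j, rfl⟩ := exists_eq_xiExp_of_xiRho_ne_zero hw
  have hcomb : ρ = hatComb a (p * (j + 1) - z) fun i => -(u + p • w) i := by
    rw [← sub_sub_cancel ((p : ℤ) • xiExp a w j) ρ, hz, xiExp, zsmul_hatComb_sub_hatComb]
    congr 1
    funext i
    simp only [Pi.sub_apply, Pi.smul_apply, Finsupp.add_apply, Finsupp.smul_apply, smul_eq_mul]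
    push_cast
    ring
  have hpos : 1 ≤ p * (j + 1) - z := by
    rw [hcomb, hatComb_apply_zero, Finset.sum_neg_distrib] at hρ
    have : 0 ≤ ∑ i, ((u + p • w) i : ℤ) := Finset.sum_nonneg fun _ _ => Int.natCast_nonneg _
    linarith
  obtain ⟨k, hk⟩ := Int.eq_ofNat_of_zero_le (sub_nonneg.2 hpos)
  exact ⟨k, by rwa [sub_eq_iff_eq_add.1 hk] at hcomb⟩

theorem zpow_xiExp_mul_prod (hπ : π ≠ 0) (l : Fin N →₀ ℕ) (k : ℕ) :
    π ^ xiExp a l k 0 * ∏ i, π ^ l i = π ^ (k + 1) := by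
  rw [Finset.prod_pow_eq_pow_sum, ← zpow_natCast, ← zpow_natCast, ← zpow_add₀ hπ,
    xiExp_apply_zero]
  push_cast
  ring_nf

theorem zpow_mul_Bone_mul_xiRho_xiExp (hπ : π ≠ 0) (u w : Fin N →₀ ℕ) (j k : ℕ) :
    π ^ (xiExp a (u + p • w) k 0 - xiExp a w j 0) *
        (Bone p a π ((p : ℤ) • xiExp a w j - xiExp a (u + p • w) k) u *
          xiRho a K (xiExp a w j) w) =
      gCoeff π j * dworkBInt p π (p * (j + 1) - (k + 1)) *
        (π ^ xiExp a (u + p • w) k 0 *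
          ∏ i, (dworkB p π (u i) * (π ^ w i / ((w i).factorial : K)))) := by
  have hne : ∏ i, π ^ w i ≠ 0 := Finset.prod_ne_zero_iff.2 fun i _ => pow_ne_zero _ hπ
  rw [zsmul_xiExp_sub_xiExp, Bone_hatComb, xiRho_xiExp, zpow_sub₀ hπ, gCoeff,
    ← zpow_xiExp_mul_prod (a := a) hπ w j, Finset.prod_mul_distrib, Finset.prod_div_distrib]
  field_simp

theorem gCoeff_mul_zpow_mul_prod (hπ : π ≠ 0) (l : Fin N →₀ ℕ) (k : ℕ) :
    gCoeff π k * (π ^ xiExp a l k 0 * ∏ i, (π ^ l i / ((l i).factorial : K))) =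
      xiRho a K (xiExp a l k) l := by
  have hne : ∏ i, π ^ l i ≠ 0 := Finset.prod_ne_zero_iff.2 fun i _ => pow_ne_zero _ hπ
  rw [xiRho_xiExp, gCoeff, ← zpow_xiExp_mul_prod (a := a) hπ l k, Finset.prod_div_distrib]
  field_simp

theorem sum_antidiagonal_prod (b c : ℕ → K) (l : Fin N →₀ ℕ) :
    ∑ x ∈ antidiagonal l, ∏ i, (b (x.1 i) * c (x.2 i)) =
      ∏ i, ∑ y ∈ antidiagonal (l i), b y.1 * c y.2 := by
  rw [Finset.prod_univ_sum]
  refine Finset.sum_bij' (fun x _ i => (x.1 i, x.2 i))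
    (fun g _ => (Finsupp.equivFunOnFinite.symm fun i => (g i).1,
      Finsupp.equivFunOnFinite.symm fun i => (g i).2)) ?_ ?_ ?_ ?_ ?_
  · intro x hx
    simp [Fintype.mem_piFinset, ← mem_antidiagonal.1 hx]
  · intro g hg
    rw [Fintype.mem_piFinset] at hg
    rw [mem_antidiagonal]
    ext i
    simpa using hg i
  · intro x _
    ext <;> simp
  · intro g _
    simp
  · intro x _
    rfl

end Coefficients

section Eigenvector

variable {n N : ℕ} {a : Fin (N + 1) → Fin n → ℤ} {p : ℕ} {K : Type*} [NormedField K]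
  [IsUltrametricDist K] {π : K} {r : ℝ}

theorem HasSumR.of_hasSum_apply {α : Type*} {f : α → MvPowerSeries (Fin N) K}
    {g : MvPowerSeries (Fin N) K} {β : α → ℝ} (hsum : ∀ l, HasSum (fun i => f i l) (g l))
    (hle : ∀ i l, ‖f i l‖ ≤ β i) (hβ : Tendsto β cofinite (𝓝 0)) : HasSumR f g := by
  refine Metric.tendsto_atTop.2 fun ε hε => ?_
  have hfin : {i | ¬β i < ε / 2}.Finite :=
    eventually_cofinite.1 (hβ.eventually (gt_mem_nhds (half_pos hε)))
  refine ⟨hfin.toFinset, fun s hs => ?_⟩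
  have hsmall (l : Fin N →₀ ℕ) : ‖(g - ∑ i ∈ s, f i) l‖ ≤ ε / 2 := by
    have hl : (g - ∑ i ∈ s, f i) l = g l - ∑ i ∈ s, f i l := by
      rw [← MvPowerSeries.coeff_apply (g - _), map_sub, map_sum]
      rfl
    rw [hl]
    refine le_of_tendsto ((hsum l).sub_const (∑ i ∈ s, f i l)).norm ?_
    filter_upwards [eventually_ge_atTop s] with t ht
    rw [← Finset.sum_sdiff_eq_sub ht]
    refine IsUltrametricDist.norm_sum_le_of_forall_le_of_nonneg (half_pos hε).le fun i hi => ?_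
    refine (hle i l).trans (le_of_not_gt fun hlt => (Finset.mem_sdiff.1 hi).2 (hs ?_))
    exact hfin.mem_toFinset.2 hlt.not_gt
  have hnonneg : 0 ≤ Rnorm (g - ∑ i ∈ s, f i) := Real.iSup_nonneg fun _ => norm_nonneg _
  rw [Real.dist_0_eq_abs, abs_of_nonneg hnonneg]
  exact (Real.iSup_le hsmall (half_pos hε).le).trans_lt (half_lt_self hε)

omit [IsUltrametricDist K] in
theorem norm_Bone_le (hr : 0 < r) (hb : ∀ i, ‖dworkB p π i‖ ≤ r ^ i) (μ : Fin (n + 1) → ℤ)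
    (u : Fin N →₀ ℕ) : ‖Bone p a π μ u‖ ≤ r ^ μ 0 := by
  by_cases h : Bone p a π μ u = 0
  · rw [h, norm_zero]
    positivity
  obtain ⟨z, -, rfl⟩ := exists_eq_hatComb_of_Bone_ne_zero h
  rw [Bone_hatComb, norm_mul, norm_prod, hatComb_apply_zero, zpow_add₀ hr.ne',
    ← Nat.cast_sum, zpow_natCast, ← Finset.prod_pow_eq_pow_sum]
  gcongr
  · exact norm_dworkBInt_le hr hb z
  · exact hb _

variable [CharZero K]

theorem norm_xiRho_le_one {ρ : Fin (n + 1) → ℤ} (hρ : 1 ≤ ρ 0) (l : Fin N →₀ ℕ) :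
    ‖xiRho a K ρ l‖ ≤ 1 := by
  by_cases h : xiRho a K ρ l = 0
  · rw [h, norm_zero]
    exact zero_le_one
  obtain ⟨k, rfl⟩ := exists_eq_xiExp_of_xiRho_ne_zero h
  have hle : ∑ i, l i ≤ k := by
    rw [xiExp_apply_zero, ← Nat.cast_sum] at hρ
    omega
  have hdvd : (∏ i, (l i).factorial) ∣ k.factorial :=
    (Nat.prod_factorial_dvd_factorial_sum _ _).trans (Nat.factorial_dvd_factorial hle)
  have hne : ((∏ i, (l i).factorial : ℕ) : K) ≠ 0 :=
    Nat.cast_ne_zero.2 (Finset.prod_ne_zero_iff.2 fun i _ => (l i).factorial_ne_zero)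
  rw [xiRho_xiExp, mul_div_assoc, norm_mul, norm_pow, norm_neg, norm_one, one_pow, one_mul,
    ← Nat.cast_prod, ← Nat.cast_div hdvd hne]
  exact IsUltrametricDist.norm_natCast_le_one K _

theorem norm_frobR_xiRho_le_one {ρ : Fin (n + 1) → ℤ} (hρ : 1 ≤ ρ 0) (v : Fin N →₀ ℕ) :
    ‖frobR p (xiRho a K ρ) v‖ ≤ 1 := by
  rw [frobR]
  split_ifs
  · exact norm_xiRho_le_one hρ _
  · rw [norm_zero]
    exact zero_le_one

theorem norm_etaTerm_xiRho_le (hπ : π ≠ 0) (hr : 0 < r) (hb : ∀ i, ‖dworkB p π i‖ ≤ r ^ i)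
    (ρ : Fin (n + 1) → ℤ) (ν : Msub a) (l : Fin N →₀ ℕ) :
    ‖etaTerm p a π (fun σ => xiRho a K σ.1) ρ ν l‖ ≤
      ‖π‖ ^ ρ 0 * r ^ (-ρ 0) * (r ^ p / ‖π‖) ^ (ν.1 0).toNat := by
  have hν := one_le_apply_zero_of_mem_latticeMint ν.2
  have hπ0 := norm_pos_iff.2 hπ
  rw [etaTerm_apply]
  refine IsUltrametricDist.norm_sum_le_of_forall_le_of_nonneg (by positivity) fun x _ => ?_
  calc ‖π ^ (ρ 0 - ν.1 0) *
        (Bone p a π ((p : ℤ) • ν.1 - ρ) x.1 * frobR p (xiRho a K ν.1) x.2)‖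
      ≤ ‖π‖ ^ (ρ 0 - ν.1 0) * (r ^ (p * ν.1 0 - ρ 0) * 1) := by
        rw [norm_mul, norm_mul, norm_zpow]
        gcongr
        · exact norm_Bone_le hr hb _ _
        · exact norm_frobR_xiRho_le_one hν _
    _ = ‖π‖ ^ ρ 0 * r ^ (-ρ 0) * (r ^ p / ‖π‖) ^ (ν.1 0).toNat := by
        rw [← zpow_natCast (r ^ p / ‖π‖), Int.toNat_of_nonneg (by omega), div_zpow,
          zpow_sub₀ hπ0.ne', sub_eq_add_neg, zpow_add₀ hr.ne', zpow_mul, zpow_natCast]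
        ring

theorem hasSum_Bone_mul_xiRho (hp : p ≠ 0) (hr : 0 < r) (hrπ : r ^ p < ‖π‖)
    (hb : ∀ i, ‖dworkB p π i‖ ≤ r ^ i) {u w : Fin N →₀ ℕ} {k : ℕ} {ρ : Fin (n + 1) → ℤ}
    (hρ : ρ ∈ latticeMint a) (hk : ρ = xiExp a (u + p • w) k) :
    HasSum (fun ν : Msub a =>
        π ^ (ρ 0 - ν.1 0) * (Bone p a π ((p : ℤ) • ν.1 - ρ) u * xiRho a K ν.1 w))
      (p * gCoeff π k *
        (π ^ ρ 0 * ∏ i, (dworkB p π (u i) * (π ^ w i / ((w i).factorial : K))))) := by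
  have hπ : π ≠ 0 := norm_pos_iff.1 ((pow_pos hr p).trans hrπ)
  set term : (Fin (n + 1) → ℤ) → K := fun ν =>
    π ^ (ρ 0 - ν 0) * (Bone p a π ((p : ℤ) • ν - ρ) u * xiRho a K ν w)
  have support_subset_range : Function.support term ⊆ Set.range (xiExp a w) := fun ν hν => by
    obtain ⟨j, hj⟩ := exists_eq_xiExp_of_xiRho_ne_zero
      (right_ne_zero_of_mul (right_ne_zero_of_mul hν))
    exact ⟨j, hj.symm⟩
  have support_subset_latticeMint : Function.support term ⊆ latticeMint a := fun ν hν => by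
    obtain ⟨j, rfl⟩ := support_subset_range hν
    obtain ⟨z, hz, hμ⟩ := exists_eq_hatComb_of_Bone_ne_zero
      (left_ne_zero_of_mul (right_ne_zero_of_mul hν))
    exact mem_latticeMint_of_smul_eq_add hp hρ (hatComb_mem_latticeM hz u)
      (hatComb_mem_closure _ _) (by rw [← hμ, add_sub_cancel])
  refine (hasSum_subtype_iff_of_support_subset support_subset_latticeMint).2 ?_
  rw [← (xiExp_injective w).hasSum_iff fun ν hν =>
    Function.notMem_support.1 fun h => hν (support_subset_range h)]
  subst hk
  have hterm : term ∘ xiExp a w = _ := funext fun j => zpow_mul_Bone_mul_xiRho_xiExp hπ u w j k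
  rw [hterm]
  exact (hasSum_gCoeff_mul_dworkBInt hp hr hrπ hb k).mul_right _

theorem hasSum_Bone_mul_frobR_xiRho (hp : p ≠ 0) (hr : 0 < r) (hrπ : r ^ p < ‖π‖)
    (hb : ∀ i, ‖dworkB p π i‖ ≤ r ^ i) {u v : Fin N →₀ ℕ} {k : ℕ} {ρ : Fin (n + 1) → ℤ}
    (hρ : ρ ∈ latticeMint a) (hk : ρ = xiExp a (u + v) k) :
    HasSum (fun ν : Msub a =>
        π ^ (ρ 0 - ν.1 0) * (Bone p a π ((p : ℤ) • ν.1 - ρ) u * frobR p (xiRho a K ν.1) v))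
      (p * gCoeff π k *
        (π ^ ρ 0 * ∏ i, (dworkB p π (u i) * coeff (v i) (expand p hp (expSeries π))))) := by
  by_cases hv : ∃ w, p • w = v
  · obtain ⟨w, rfl⟩ := hv
    simpa only [frobR_smul hp, Finsupp.smul_apply, smul_eq_mul, coeff_expand_mul,
      coeff_expSeries] using hasSum_Bone_mul_xiRho hp hr hrπ hb hρ hk
  · have hfrob (f : MvPowerSeries (Fin N) K) : frobR p f v = 0 := dif_neg hv
    obtain ⟨i, hi⟩ : ∃ i, ¬p ∣ v i := by
      by_contra! hdvd
      choose w hw using hdvd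
      exact hv ⟨Finsupp.equivFunOnFinite.symm w, by ext i; simp [hw i]⟩
    have hprod : ∏ i, (dworkB p π (u i) * coeff (v i) (expand p hp (expSeries π))) = 0 :=
      Finset.prod_eq_zero (Finset.mem_univ i) (by rw [coeff_expand, if_neg hi, mul_zero])
    simp only [hfrob, hprod, mul_zero]
    exact hasSum_zero

theorem hasSum_etaTerm_xiRho_apply (hp : p ≠ 0) (hr : 0 < r) (hrπ : r ^ p < ‖π‖)
    (hb : ∀ i, ‖dworkB p π i‖ ≤ r ^ i) {ρ : Fin (n + 1) → ℤ} (hρ : ρ ∈ latticeMint a)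
    (l : Fin N →₀ ℕ) :
    HasSum (fun ν => etaTerm p a π (fun σ => xiRho a K σ.1) ρ ν l) (p * xiRho a K ρ l) := by
  simp only [etaTerm_apply]
  by_cases hk : ∃ k, ρ = xiExp a l k
  · obtain ⟨k, hk⟩ := hk
    have hsum := hasSum_sum fun x (hx : x ∈ antidiagonal l) =>
      hasSum_Bone_mul_frobR_xiRho (π := π) hp hr hrπ hb hρ (k := k)
        (by rwa [mem_antidiagonal.1 hx])
    convert hsum using 1
    rw [← Finset.mul_sum, ← Finset.mul_sum, sum_antidiagonal_prod (dworkB p π)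
      fun t => coeff t (expand p hp (expSeries π))]
    simp only [sum_antidiagonal_dworkB_mul]
    rw [mul_assoc, hk, gCoeff_mul_zpow_mul_prod (norm_pos_iff.1 ((pow_pos hr p).trans hrπ))]
  · have hxi : xiRho a K ρ l = 0 := by
      by_contra h
      exact hk (exists_eq_xiExp_of_xiRho_ne_zero h)
    have hterm : ∀ ν : Msub a, ∀ x ∈ antidiagonal l,
        Bone p a π ((p : ℤ) • ν.1 - ρ) x.1 * frobR p (xiRho a K ν.1) x.2 = 0 := by
      intro ν x hx
      by_contra h
      obtain ⟨k, hk'⟩ := exists_eq_xiExp_of_Bone_mul_frobR_ne_zero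
        (one_le_apply_zero_of_mem_latticeMint hρ) h
      exact hk ⟨k, by rwa [mem_antidiagonal.1 hx] at hk'⟩
    convert hasSum_zero (α := K) with ν
    · exact Finset.sum_eq_zero fun x hx => by rw [hterm ν x hx, mul_zero]
    · rw [hxi, mul_zero]

theorem hasSumR_etaTerm_xiRho (hp : p ≠ 0) (hr : 0 < r) (hrπ : r ^ p < ‖π‖)
    (hb : ∀ i, ‖dworkB p π i‖ ≤ r ^ i) {ρ : Fin (n + 1) → ℤ} (hρ : ρ ∈ latticeMint a) :
    HasSumR (etaTerm p a π (fun σ => xiRho a K σ.1) ρ) ((p : K) • xiRho a K ρ) := by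
  have hπ : 0 < ‖π‖ := (pow_pos hr p).trans hrπ
  refine HasSumR.of_hasSum_apply (hasSum_etaTerm_xiRho_apply hp hr hrπ hb hρ)
    (norm_etaTerm_xiRho_le (norm_pos_iff.1 hπ) hr hb ρ) ?_
  have hgeom := tendsto_pow_atTop_nhds_zero_of_lt_one (by positivity) ((div_lt_one hπ).2 hrπ)
  simpa using (hgeom.comp tendsto_toNat_apply_zero_cofinite).const_mul _

theorem memS_xiRho : memS a fun ρ : Msub a => xiRho a K ρ.1 := by
  refine ⟨1, ?_⟩
  rintro _ ⟨⟨ρ, l⟩, rfl⟩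
  exact norm_xiRho_le_one (one_le_apply_zero_of_mem_latticeMint ρ.2) l

end Eigenvector

end AHG

theorem stmt_18_general {p : ℕ} [Fact p.Prime] (hp2 : p ≠ 2) {K : Type*} [NormedField K]
    [NormedAlgebra ℚ_[p] K] {π : K} (hπ : π ^ (p - 1) = -(p : K)) {n N : ℕ}
    (a : Fin (N + 1) → Fin n → ℤ) :
    AHG.memS a (fun ρ : AHG.Msub a => AHG.xiRho a K ρ.1) ∧
    ∀ ρ : AHG.Msub a,
      AHG.HasSumR (AHG.etaTerm p a π (fun σ => AHG.xiRho a K σ.1) ρ.1)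
        ((p : K) • AHG.xiRho a K ρ.1) := by
  have := AHG.charZero_of_padic p K
  have := AHG.isUltrametricDist_of_padic p K
  obtain ⟨r, hr, hrπ, hb⟩ := AHG.exists_pow_lt_norm_and_norm_dworkB_le hp2 hπ
  exact ⟨AHG.memS_xiRho, fun ρ =>
    AHG.hasSumR_etaTerm_xiRho (Fact.out : p.Prime).ne_zero hr hrπ hb ρ.2⟩

/-- for `ξ(λ,x) = γ°(G(λ_0,x) ∏_{i=1}^N exp(πλ_i x^{â_i}))` (whose
coefficient family is `xiRho`), one has `α*(ξ) = p·ξ`, i.e. for every `ρ ∈ M°` the series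
defining the `ρ`-coefficient of `α*(ξ)` converges in `R` to `p·ξ_ρ`. -/
theorem stmt_18 (p : ℕ) [Fact p.Prime] (hp2 : p ≠ 2)
    {K : Type*} [NormedField K] [IsUltrametricDist K] [CompleteSpace K] [IsAlgClosed K]
    (ι : ℚ_[p] →+* K) (hι : ∀ x, ‖ι x‖ = ‖x‖)
    (π : K) (hπ : π ^ (p - 1) = -(p : K))
    (n N : ℕ) (hn : 0 < n) (hN : 0 < N) (a : Fin (N + 1) → Fin n → ℤ) :
    AHG.memS a (fun ρ : AHG.Msub a => AHG.xiRho a K ρ.1) ∧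
    ∀ ρ : AHG.Msub a,
      AHG.HasSumR (AHG.etaTerm p a π (fun σ => AHG.xiRho a K σ.1) ρ.1)
        ((p : K) • AHG.xiRho a K ρ.1) := by
  let _ : NormedAlgebra ℚ_[p] K :=
    { ι.toAlgebra with norm_smul_le := fun x y => ((norm_mul _ y).trans (by rw [hι])).le }
  exact stmt_18_general hp2 hπ a
end

section
/- Suppose a_0 is the unique point of ℤ^n lying in the interior of Δ, the convex hull of a_1,…,a_N in ℝ^n. Then the ratio Φ(λ)/Φ(λ^p) extends to an analytic function on 𝒟_+: there exists f ∈ R' — a function on 𝒟_+ that is a uniform limit on 𝒟_+ of rational functions in λ_1/λ_0,…,λ_N/λ_0 defined at every point of 𝒟_+ — such that for every λ ∈ 𝒟 one has f(λ) = Φ(λ)/Φ(λ^p), where Φ(λ^p) denotes Φ evaluated at (λ_0^p,…,λ_N^p) (which is nonzero since ‖Φ(λ^p)‖ = 1 on 𝒟). -/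
open scoped BigOperators Classical

open scoped BigOperators Classical

/-!
Put `y i = λ_i / λ_0` and `g = -∑ y i x ^ (a_i - a_0)`. The truncation of `Φ` at degree `M` is the
constant term in `x` of `1 + g + ⋯ + g ^ (M - 1)`. For `M = p ^ s` this sum is the product of the
factors `∑_{d < p} g ^ (d p ^ j)`, `j < s`, each congruent modulo `p ^ j` to the Frobenius lift of
the previous one, so its ghost terms are divisible by `p ^ k`. Since `a_0` is the only interior
lattice point of `Δ`, a monomial of degree less than `p ^ k` in the `y i` cannot have as its
`x`-exponent a nonzero multiple of `p ^ k`. Hence taking constant terms is multiplicative on the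
products in the ghost expansion, and the truncations `F_s` of `Φ` at degree `p ^ s` inherit it. This
gives the Dwork congruences `F_{s+2} σ(F_s) ≡ F_{s+1} σ(F_{s+1})` modulo `p ^ (s + 1)`, where `σ`
is `y ↦ y ^ p`, so `F_{s+1} / σ(F_s)` converges uniformly where `F_1` has norm `1`.
-/

namespace AHG

open Filter MvPolynomial Topology

section GhostExpansion

variable {R : Type*} [CommRing R] {σ : R →+* R} {c : R}

/-- The sequence `I` determined by `P (s + 1) = ∑ k ≤ s, I k * σ ^ (k + 1) (P (s - k))` when
`P 0 = 1`. -/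
noncomputable def ghostTerm (σ : R →+* R) (P : ℕ → R) (s : ℕ) : R :=
  P (s + 1) - ∑ k : Fin s, ghostTerm σ P k * (σ ^ (k + 1 : ℕ)) (P (s - k))
termination_by s
decreasing_by exact k.isLt

lemma ghostTerm_eq (P : ℕ → R) (s : ℕ) :
    ghostTerm σ P s =
      P (s + 1) - ∑ k ∈ Finset.range s, ghostTerm σ P k * (σ ^ (k + 1)) (P (s - k)) := by
  rw [ghostTerm, Finset.sum_range fun k => ghostTerm σ P k * (σ ^ (k + 1)) (P (s - k))]

lemma sum_ghostTerm_mul {P : ℕ → R} (hP : P 0 = 1) (s : ℕ) :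
    ∑ k ∈ Finset.range (s + 1), ghostTerm σ P k * (σ ^ (k + 1)) (P (s - k)) = P (s + 1) := by
  rw [Finset.sum_range_succ, ghostTerm_eq P s, Nat.sub_self, hP, map_one, mul_one,
    add_sub_cancel]

lemma pow_dvd_map_pow (hc : σ c = c) {x : R} {n : ℕ} (hx : c ^ n ∣ x) (k : ℕ) :
    c ^ n ∣ (σ ^ k) x := by
  have hck : (σ ^ k) c = c := by
    rw [RingHom.coe_pow]
    exact Function.iterate_fixed hc k
  simpa only [map_pow, hck] using map_dvd (σ ^ k) hx

lemma pow_dvd_sub_map_pow {G : ℕ → R} (hc : σ c = c)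
    (hG : ∀ s, c ^ (s + 1) ∣ G (s + 1) - σ (G s)) (m k : ℕ) :
    c ^ (m + 1) ∣ G (m + k) - (σ ^ k) (G m) := by
  induction k with
  | zero => simp
  | succ k ih =>
    have hsplit : G (m + (k + 1)) - (σ ^ (k + 1)) (G m) =
        (G (m + k + 1) - σ (G (m + k))) + σ (G (m + k) - (σ ^ k) (G m)) := by
      rw [pow_succ', RingHom.mul_def, RingHom.comp_apply, map_sub, ← add_assoc]
      ring
    rw [hsplit]
    refine dvd_add ((pow_dvd_pow c (by omega)).trans (hG (m + k))) ?_
    simpa using pow_dvd_map_pow hc ih 1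

theorem pow_dvd_ghostTerm {P G : ℕ → R} (hc : σ c = c) (hP : P 0 = 1)
    (hPG : ∀ s, P (s + 1) = P s * G s) (hG : ∀ s, c ^ (s + 1) ∣ G (s + 1) - σ (G s)) (s : ℕ) :
    c ^ s ∣ ghostTerm σ P s := by
  induction s using Nat.strong_induction_on with
  | _ s ih =>
    rcases s with _ | s
    · simp
    have hdiff : ghostTerm σ P (s + 1) = ∑ k ∈ Finset.range (s + 1),
        ghostTerm σ P k * (σ ^ (k + 1)) (P (s - k)) * (G (s + 1) - (σ ^ (k + 1)) (G (s - k))) := by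
      rw [ghostTerm_eq, hPG (s + 1), ← sum_ghostTerm_mul (σ := σ) hP s, Finset.sum_mul,
        ← Finset.sum_sub_distrib]
      refine Finset.sum_congr rfl fun k hk => ?_
      rw [Nat.succ_sub (Finset.mem_range_succ_iff.1 hk), hPG, map_mul]
      ring
    rw [hdiff]
    refine Finset.dvd_sum fun k hk => ?_
    have hks := Finset.mem_range_succ_iff.1 hk
    have hGk := pow_dvd_sub_map_pow hc hG (s - k) (k + 1)
    rw [show s - k + (k + 1) = s + 1 by omega] at hGk
    rw [show s + 1 = k + (s - k + 1) by omega, pow_add]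
    refine mul_dvd_mul ((ih k (by omega)).mul_right _) ?_
    rwa [show k + (s - k + 1) = s + 1 by omega]

/-- `F` satisfies a recursion `F (s + 1) = ∑ k ≤ s, C k * σ ^ (k + 1) (F (s - k))` in which `C k`
is divisible by `c ^ k`; this is the property from which Dwork congruences are derived. -/
def HasGhostExpansion (σ : R →+* R) (c : R) (F : ℕ → R) : Prop :=
  ∃ C : ℕ → R, (∀ k, c ^ k ∣ C k) ∧
    ∀ s, F (s + 1) = ∑ k ∈ Finset.range (s + 1), C k * (σ ^ (k + 1)) (F (s - k))

lemma HasGhostExpansion.dvd_sub_mul {F : ℕ → R} (hF : HasGhostExpansion σ c F) (hF0 : F 0 = 1)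
    (s : ℕ) :
    c ∣ F (s + 1) - F 1 * σ (F s) := by
  obtain ⟨C, hC, hrec⟩ := hF
  have hC0 : F 1 = C 0 := by simp [hrec 0, hF0]
  rw [hrec s, hC0, Finset.sum_range_succ', zero_add, pow_one, Nat.sub_zero, add_sub_cancel_right]
  exact Finset.dvd_sum fun k _ => ((dvd_pow_self c k.succ_ne_zero).trans (hC (k + 1))).mul_right _

/- Cancelling the intermediate factors chains the congruences
`F (m + 2) / σ (F (m + 1)) ≡ F (m + 1) / σ (F m)` into
`F (s + 1) / F s ≡ σ ^ k (F (s - k + 1) / F (s - k))`. -/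
lemma pow_dvd_mul_map_pow_sub [IsDomain R] {F : ℕ → R} (hc : σ c = c) (hprime : Prime c)
    (hF : ∀ k m, ¬c ∣ (σ ^ k) (F m)) {s : ℕ}
    (hcong : ∀ m < s, c ^ (m + 1) ∣ F (m + 2) * σ (F m) - F (m + 1) * σ (F (m + 1)))
    {k m : ℕ} (hkm : m + k = s) :
    c ^ (m + 1) ∣ F s * (σ ^ k) (F (m + 1)) - F (s + 1) * (σ ^ k) (F m) := by
  induction k generalizing m with
  | zero => simp [← hkm, mul_comm]
  | succ k ih =>
    have hstep := pow_dvd_map_pow hc (hcong m (by omega)) k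
    have hchain := (pow_dvd_pow c (Nat.le_succ (m + 1))).trans (ih (m := m + 1) (by omega))
    refine hprime.pow_dvd_of_dvd_mul_left _ (hF k (m + 1)) ?_
    convert! dvd_sub (hchain.mul_right ((σ ^ (k + 1)) (F m))) (hstep.mul_left (F s)) using 1
    simp only [map_sub, map_mul, pow_succ, RingHom.mul_def, RingHom.comp_apply]
    ring

theorem HasGhostExpansion.dwork_congruence [IsDomain R] {F : ℕ → R}
    (hexp : HasGhostExpansion σ c F) (hc : σ c = c) (hprime : Prime c)
    (hF : ∀ k m, ¬c ∣ (σ ^ k) (F m)) (s : ℕ) :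
    c ^ (s + 1) ∣ F (s + 2) * σ (F s) - F (s + 1) * σ (F (s + 1)) := by
  obtain ⟨C, hC, hrec⟩ := hexp
  induction s using Nat.strong_induction_on with
  | _ s ih =>
    have hdiff : F (s + 2) * σ (F s) - F (s + 1) * σ (F (s + 1)) =
        C (s + 1) * (σ ^ (s + 2)) (F 0) * σ (F s) + ∑ k ∈ Finset.range (s + 1), C k *
          σ (F s * (σ ^ k) (F (s - k + 1)) - F (s + 1) * (σ ^ k) (F (s - k))) := by
      rw [← sub_eq_iff_eq_add', sub_right_comm, ← sub_mul, hrec (s + 1),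
        Finset.sum_range_succ, Nat.sub_self, add_sub_cancel_right]
      nth_rewrite 1 [hrec s]
      rw [Finset.sum_mul, Finset.sum_mul, ← Finset.sum_sub_distrib]
      refine Finset.sum_congr rfl fun k hk => ?_
      rw [Nat.succ_sub (Finset.mem_range_succ_iff.1 hk), pow_succ', RingHom.mul_def]
      simp only [RingHom.comp_apply, map_sub, map_mul, Nat.succ_eq_add_one]
      ring
    rw [hdiff]
    refine dvd_add (((hC (s + 1)).mul_right _).mul_right _) (Finset.dvd_sum fun k hk => ?_)
    have hks := Finset.mem_range_succ_iff.1 hk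
    have hcross := pow_dvd_mul_map_pow_sub hc hprime hF ih (Nat.sub_add_cancel hks)
    rw [show s + 1 = k + (s - k + 1) by omega, pow_add]
    refine mul_dvd_mul (hC k) ?_
    simpa [show k + (s - k + 1) = s + 1 by omega] using pow_dvd_map_pow hc hcross 1

end GhostExpansion

section FrobeniusLift

variable {R : Type*} [CommRing R] {p : ℕ} {σ : R →+* R}

/-- `σ` lifts the Frobenius `x ↦ x ^ p` modulo `p`. -/
def IsFrobeniusLift (p : ℕ) (σ : R →+* R) : Prop :=
  ∀ x, (p : R) ∣ x ^ p - σ x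

lemma IsFrobeniusLift.pow_dvd_pow_sub (hσ : IsFrobeniusLift p σ) (x : R) (s : ℕ) :
    (p : R) ^ (s + 1) ∣ x ^ p ^ (s + 1) - σ (x ^ p ^ s) := by
  simpa only [← pow_mul, ← pow_succ', map_pow] using dvd_sub_pow_of_dvd_sub (hσ x) s

lemma geom_sum_range_mul {R : Type*} [CommSemiring R] (x : R) (m n : ℕ) :
    ∑ i ∈ Finset.range (m * n), x ^ i =
      (∑ i ∈ Finset.range m, x ^ i) * ∑ j ∈ Finset.range n, (x ^ m) ^ j := by
  induction n with
  | zero => simp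
  | succ n ih =>
    rw [Nat.mul_succ, Finset.sum_range_add, ih, Finset.sum_range_succ, mul_add]
    simp only [pow_add, pow_mul, mul_comm ((x ^ m) ^ n), ← Finset.sum_mul]

theorem IsFrobeniusLift.pow_dvd_ghostTerm_geom_sum (hσ : IsFrobeniusLift p σ) (g : R) (s : ℕ) :
    (p : R) ^ s ∣ ghostTerm σ (fun s => ∑ i ∈ Finset.range (p ^ s), g ^ i) s := by
  refine pow_dvd_ghostTerm (G := fun s => ∑ d ∈ Finset.range p, (g ^ p ^ s) ^ d)
    (map_natCast σ p) (by simp) (fun s => by rw [pow_succ, geom_sum_range_mul]) (fun s => ?_) s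
  rw [map_sum, ← Finset.sum_sub_distrib]
  refine Finset.dvd_sum fun d _ => ?_
  rw [map_pow]
  exact (hσ.pow_dvd_pow_sub g s).trans (sub_dvd_pow_sub_pow _ _ d)

end FrobeniusLift

section Expand

variable {τ R : Type*} [CommSemiring R]

/-- The substitution `X i ↦ X i ^ p` as a ring endomorphism, so that its iterates are powers. -/
noncomputable def expandHom (τ R : Type*) [CommSemiring R] (p : ℕ) :
    MvPolynomial τ R →+* MvPolynomial τ R :=
  (expand p : MvPolynomial τ R →ₐ[R] MvPolynomial τ R)

lemma expandHom_apply (p : ℕ) (f : MvPolynomial τ R) : expandHom τ R p f = expand p f :=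
  rfl

lemma expandHom_pow_apply (p k : ℕ) (f : MvPolynomial τ R) :
    (expandHom τ R p ^ k) f = expand (p ^ k) f := by
  induction k with
  | zero => simp
  | succ k ih =>
    rw [pow_succ', RingHom.mul_def, RingHom.comp_apply, ih, pow_succ', expand_mul,
      expandHom_apply]

lemma totalDegree_ghostTerm_expandHom_lt {R : Type*} [CommRing R] {p : ℕ} (hp : p ≠ 0)
    {P : ℕ → MvPolynomial τ R} (hP : ∀ s, (P s).totalDegree < p ^ s) (s : ℕ) :
    (ghostTerm (expandHom τ R p) P s).totalDegree < p ^ (s + 1) := by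
  induction s using Nat.strong_induction_on with
  | _ s ih =>
    rw [ghostTerm_eq]
    refine (totalDegree_sub _ _).trans_lt (max_lt (hP _) ?_)
    refine (totalDegree_finsetSum _ _).trans_lt ?_
    refine (Finset.sup_lt_iff (by positivity)).2 fun k hk => (totalDegree_mul _ _).trans_lt ?_
    rw [Finset.mem_range] at hk
    rw [expandHom_pow_apply, totalDegree_expand]
    calc (ghostTerm (expandHom τ R p) P k).totalDegree + (P (s - k)).totalDegree * p ^ (k + 1)
        < p ^ (k + 1) + (P (s - k)).totalDegree * p ^ (k + 1) := by gcongr; exact ih k hk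
      _ = ((P (s - k)).totalDegree + 1) * p ^ (k + 1) := by ring
      _ ≤ p ^ (s - k) * p ^ (k + 1) := by gcongr; exact hP _
      _ = p ^ (s + 1) := by rw [← pow_add]; congr 1; omega

lemma totalDegree_geom_sum_lt {g : MvPolynomial τ R} (hg : g.totalDegree ≤ 1) {M : ℕ}
    (hM : 0 < M) : (∑ i ∈ Finset.range M, g ^ i).totalDegree < M := by
  refine (totalDegree_finsetSum _ _).trans_lt ((Finset.sup_lt_iff hM).2 fun i hi => ?_)
  calc (g ^ i).totalDegree ≤ i * g.totalDegree := totalDegree_pow _ _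
    _ ≤ i := mul_le_of_le_one_right' hg
    _ < M := Finset.mem_range.1 hi

lemma constantCoeff_expandHom_pow {p : ℕ} (hp : p ≠ 0) (k : ℕ) (f : MvPolynomial τ R) :
    constantCoeff ((expandHom τ R p ^ k) f) = constantCoeff f := by
  rw [expandHom_pow_apply]
  exact coeff_expand_zero (p ^ k) (pow_ne_zero k hp) f

lemma isFrobeniusLift_expandHom (τ : Type*) (p : ℕ) [Fact p.Prime] :
    IsFrobeniusLift p (expandHom τ ℤ p) := by
  intro f
  rw [expandHom_apply, ← C_eq_coe_nat, C_dvd_iff_zmod, map_sub, sub_eq_zero, map_expand,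
    map_pow, expand_zmod]

lemma prime_natCast {p : ℕ} (hp : p.Prime) : Prime (p : MvPolynomial τ ℤ) := by
  rw [← C_eq_coe_nat]
  exact (prime_C_iff _).2 (Nat.prime_iff_prime_int.1 hp)

lemma not_natCast_dvd_of_constantCoeff_eq_one {p : ℕ} (hp : p ≠ 1) {f : MvPolynomial τ ℤ}
    (hf : constantCoeff f = 1) : ¬(p : MvPolynomial τ ℤ) ∣ f := by
  intro h
  have := map_dvd constantCoeff h
  rw [hf, map_natCast] at this
  exact hp (by exact_mod_cast Int.eq_one_of_dvd_one (Int.natCast_nonneg p) this)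

end Expand

section WeightZeroComponent

variable {τ R M : Type*} [AddCommGroup M] {w : τ → M} {q : ℕ}

lemma weight_add_smul_eq_zero_iff
    (hw : ∀ (l : τ →₀ ℕ) (u : M), l.degree < q → Finsupp.weight w l = q • u → u = 0)
    {l : τ →₀ ℕ} (hl : l.degree < q) (m : τ →₀ ℕ) :
    Finsupp.weight w (l + q • m) = 0 ↔ Finsupp.weight w l = 0 ∧ Finsupp.weight w m = 0 := by
  constructor
  · intro h
    have hlm : Finsupp.weight w l = q • -Finsupp.weight w m := by
      rw [smul_neg, ← map_nsmul]
      exact eq_neg_of_add_eq_zero_left (by rwa [← map_add])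
    have hm : Finsupp.weight w m = 0 := neg_eq_zero.1 (hw l _ hl hlm)
    exact ⟨by rw [hlm, hm, neg_zero, smul_zero], hm⟩
  · rintro ⟨hl, hm⟩
    rw [map_add, map_nsmul, hl, hm, smul_zero, add_zero]

lemma weightedHomogeneousComponent_monomial [CommSemiring R] (m : M) (d : τ →₀ ℕ) (r : R) :
    weightedHomogeneousComponent w m (monomial d r) =
      if Finsupp.weight w d = m then monomial d r else 0 := by
  simpa only [eq_comm] using
    weightedHomogeneousComponent_of_mem (isWeightedHomogeneous_monomial w d r rfl)

theorem weightedHomogeneousComponent_zero_mul_expand [CommSemiring R]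
    (hw : ∀ (l : τ →₀ ℕ) (u : M), l.degree < q → Finsupp.weight w l = q • u → u = 0)
    {A : MvPolynomial τ R} (hA : A.totalDegree < q) (B : MvPolynomial τ R) :
    weightedHomogeneousComponent w 0 (A * expand q B) =
      weightedHomogeneousComponent w 0 A * expand q (weightedHomogeneousComponent w 0 B) := by
  rw [A.as_sum, B.as_sum]
  simp only [map_sum, Finset.sum_mul_sum]
  refine Finset.sum_congr rfl fun l hl => Finset.sum_congr rfl fun m _ => ?_
  have hdeg : l.degree < q := (le_totalDegree hl).trans_lt hA
  simp only [expand_monomial, monomial_mul, weightedHomogeneousComponent_monomial,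
    weight_add_smul_eq_zero_iff hw hdeg m, apply_ite (expand q), map_zero, ite_mul, mul_ite,
    mul_zero, zero_mul]
  split_ifs <;> tauto

theorem hasGhostExpansion_weightedHomogeneousComponent_geom_sum {p : ℕ} [Fact p.Prime]
    (hw : ∀ (k : ℕ) (l : τ →₀ ℕ) (u : M),
      l.degree < p ^ k → Finsupp.weight w l = p ^ k • u → u = 0)
    {g : MvPolynomial τ ℤ} (hg : g.totalDegree ≤ 1) :
    HasGhostExpansion (expandHom τ ℤ p) (p : MvPolynomial τ ℤ)
      (fun s => weightedHomogeneousComponent w 0 (∑ i ∈ Finset.range (p ^ s), g ^ i)) := by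
  have hp := (Fact.out : p.Prime).pos
  set P : ℕ → MvPolynomial τ ℤ := fun s => ∑ i ∈ Finset.range (p ^ s), g ^ i with hP
  refine ⟨fun k => weightedHomogeneousComponent w 0 (ghostTerm (expandHom τ ℤ p) P k),
    fun k => ?_, fun s => ?_⟩
  · obtain ⟨z, hz⟩ := (isFrobeniusLift_expandHom τ p).pow_dvd_ghostTerm_geom_sum g k
    refine ⟨weightedHomogeneousComponent w 0 z, ?_⟩
    change weightedHomogeneousComponent w 0 (ghostTerm (expandHom τ ℤ p) P k) = _
    rw [hz, ← C_eq_coe_nat, ← map_pow, weightedHomogeneousComponent_C_mul]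
  · change weightedHomogeneousComponent w 0 (P (s + 1)) = _
    rw [← sum_ghostTerm_mul (σ := expandHom τ ℤ p) (P := P) (by simp [hP]) s, map_sum]
    refine Finset.sum_congr rfl fun k _ => ?_
    rw [expandHom_pow_apply, expandHom_pow_apply]
    exact weightedHomogeneousComponent_zero_mul_expand (hw (k + 1))
      (totalDegree_ghostTerm_expandHom_lt hp.ne'
        (fun s => totalDegree_geom_sum_lt hg (pow_pos hp s)) k) _

end WeightZeroComponent

section InteriorPoint

lemma add_sum_smul_sub_mem_interior {E ι : Type*} [AddCommGroup E] [Module ℝ E]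
    [TopologicalSpace E] [IsTopologicalAddGroup E] [ContinuousConstSMul ℝ E] {s : Set E}
    (hs : Convex ℝ s) {x : E} (hx : x ∈ interior s) {t : Finset ι} {c : ι → ℝ} {v : ι → E}
    (hc : ∀ i ∈ t, 0 ≤ c i) (hc1 : ∑ i ∈ t, c i < 1) (hv : ∀ i ∈ t, v i ∈ s) :
    x + ∑ i ∈ t, c i • (v i - x) ∈ interior s := by
  rcases (Finset.sum_nonneg hc).eq_or_lt with h0 | hpos
  · have hzero : ∀ i ∈ t, c i • (v i - x) = 0 := fun i hi => by
      rw [(Finset.sum_eq_zero_iff_of_nonneg hc).1 h0.symm i hi, zero_smul]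
    rwa [Finset.sum_eq_zero hzero, add_zero]
  · have hcombo := hs.combo_interior_self_mem_interior hx (hs.centerMass_mem hc hpos hv)
      (sub_pos.2 hc1) hpos.le (sub_add_cancel _ _)
    convert! hcombo using 1
    rw [Finset.centerMass, smul_inv_smul₀ hpos.ne', sub_smul, one_smul]
    simp only [smul_sub, Finset.sum_sub_distrib, Finset.sum_smul]
    abel

variable {n N : ℕ} {a : Fin (N + 1) → Fin n → ℤ}

/-- The exponents `a_i - a_0`, `i = 1, …, N`, of the Laurent polynomial
`-∑ (λ_i / λ_0) x ^ (a_i - a_0)`. -/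
def relExponent (a : Fin (N + 1) → Fin n → ℤ) (i : Fin N) : Fin n → ℤ :=
  a i.succ - a 0

lemma weight_relExponent_apply (l : Fin N →₀ ℕ) (k : Fin n) :
    Finsupp.weight (relExponent a) l k = ∑ i, (l i : ℤ) * (a i.succ k - a 0 k) := by
  rw [Finsupp.weight_apply, Finsupp.sum_fintype _ _ (by simp), Finset.sum_apply]
  simp [relExponent]

lemma weight_relExponent_eq_zero_iff (l : Fin N →₀ ℕ) :
    Finsupp.weight (relExponent a) l = 0 ↔ ⇑l ∈ LplusSet a := by
  rw [LplusSet, Set.mem_ofPred_eq, funext_iff, funext_iff, Fin.forall_fin_succ]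
  simp [weight_relExponent_apply, hat, mul_sub, ← Finset.sum_mul, sub_eq_zero]

/- If the degree of `l` is less than `q`, then `a_0 + (1 / q) ∑ l_i (a_i - a_0)` is an interior
point of `Δ`. -/
theorem eq_zero_of_weight_relExponent_eq_nsmul (hΔ : uniqueInteriorPoint a) {q : ℕ}
    {l : Fin N →₀ ℕ} (hl : l.degree < q) {u : Fin n → ℤ}
    (h : Finsupp.weight (relExponent a) l = q • u) : u = 0 := by
  have hq : (0 : ℝ) < q := by exact_mod_cast (Nat.zero_le _).trans_lt hl
  have hsum : ∑ i, (l i : ℝ) / q < 1 := by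
    rw [← Finset.sum_div, div_lt_one hq]
    exact_mod_cast Finsupp.degree_eq_sum l ▸ hl
  have hmem := add_sum_smul_sub_mem_interior (convex_convexHull ℝ _) hΔ.1
    (fun i _ => by positivity) hsum fun i _ => subset_convexHull ℝ _ (Set.mem_range_self i)
  refine add_eq_right.1 (hΔ.2 (u + a 0) ?_)
  convert! hmem using 1
  ext k
  have hk : ∑ i, (l i : ℝ) * (a i.succ k - a 0 k) = q * u k := by
    have := congrFun h k
    rw [weight_relExponent_apply] at this
    exact_mod_cast this
  simp only [Pi.add_apply, Finset.sum_apply, Pi.smul_apply, Pi.sub_apply, smul_eq_mul,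
    div_mul_eq_mul_div, ← Finset.sum_div, hk]
  rw [mul_div_cancel_left₀ _ hq.ne', add_comm, Int.cast_add]

end InteriorPoint

section Truncation

variable {n N : ℕ}

/-- The term of `Φ` with index `l`, as a function of `y i = λ_i / λ_0`. -/
def phiTerm {A : Type*} [CommRing A] (y : Fin N → A) (l : Fin N → ℕ) : A :=
  (-1) ^ (∑ i, l i) * (Nat.multinomial Finset.univ l : A) * ∏ i, y i ^ l i

lemma map_phiTerm {A B F : Type*} [CommRing A] [CommRing B] [FunLike F A B] [RingHomClass F A B]
    (f : F) (y : Fin N → A) (l : Fin N → ℕ) : f (phiTerm y l) = phiTerm (fun i => f (y i)) l := by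
  simp [phiTerm]

lemma sum_neg_pow_eq_sum_phiTerm {A : Type*} [CommRing A] (y : Fin N → A) (m : ℕ) :
    (∑ i, -y i) ^ m = ∑ l ∈ Finset.piAntidiag Finset.univ m, phiTerm y l := by
  rw [Finset.sum_pow_eq_sum_piAntidiag]
  refine Finset.sum_congr rfl fun l _ => ?_
  simp only [neg_pow (y _), Finset.prod_mul_distrib, Finset.prod_pow_eq_pow_sum, phiTerm]
  ring

lemma phiTerm_X {R : Type*} [CommRing R] (l : Fin N → ℕ) :
    phiTerm (X : Fin N → MvPolynomial (Fin N) R) l =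
      monomial (Finsupp.equivFunOnFinite.symm l)
        ((-1) ^ (∑ i, l i) * (Nat.multinomial Finset.univ l : R)) := by
  rw [monomial_eq, Finsupp.prod_fintype _ _ fun _ => pow_zero _]
  simp [phiTerm]

/-- The exponents of the monomials of degree less than `M` in `N` variables. -/
noncomputable def exponentsBelow (N M : ℕ) : Finset (Fin N → ℕ) :=
  (Finset.range M).biUnion (Finset.piAntidiag Finset.univ)

lemma mem_exponentsBelow {M : ℕ} {l : Fin N → ℕ} : l ∈ exponentsBelow N M ↔ ∑ i, l i < M := by
  simp [exponentsBelow]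

lemma geom_sum_sum_neg_eq_sum_phiTerm {A : Type*} [CommRing A] (y : Fin N → A) (M : ℕ) :
    ∑ m ∈ Finset.range M, (∑ i, -y i) ^ m = ∑ l ∈ exponentsBelow N M, phiTerm y l := by
  rw [exponentsBelow, Finset.sum_biUnion fun m _ m' _ hne => Finset.disjoint_left.2 fun l hm hm' =>
    hne ((Finset.mem_piAntidiag.1 hm).1.symm.trans (Finset.mem_piAntidiag.1 hm').1)]
  exact Finset.sum_congr rfl fun m _ => sum_neg_pow_eq_sum_phiTerm y m

/-- The truncation of `Φ` to the terms with `l_1 + ⋯ + l_N < M`, as a polynomial in the variables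
`λ_i / λ_0`. -/
noncomputable def phiTrunc (a : Fin (N + 1) → Fin n → ℤ) (M : ℕ) : MvPolynomial (Fin N) ℤ :=
  ∑ l ∈ exponentsBelow N M with l ∈ LplusSet a, phiTerm X l

variable (a : Fin (N + 1) → Fin n → ℤ)

lemma phiTrunc_eq_weightedHomogeneousComponent (M : ℕ) :
    phiTrunc a M = weightedHomogeneousComponent (relExponent a) 0
      (∑ m ∈ Finset.range M, (∑ i, -X i) ^ m) := by
  rw [geom_sum_sum_neg_eq_sum_phiTerm, map_sum, phiTrunc, Finset.sum_filter]
  refine Finset.sum_congr rfl fun l _ => ?_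
  rw [phiTerm_X, weightedHomogeneousComponent_monomial, weight_relExponent_eq_zero_iff,
    Finsupp.coe_equivFunOnFinite_symm]

lemma constantCoeff_phiTrunc {M : ℕ} (hM : M ≠ 0) : constantCoeff (phiTrunc a M) = 1 := by
  rw [phiTrunc_eq_weightedHomogeneousComponent, constantCoeff_eq,
    coeff_weightedHomogeneousComponent, if_pos (map_zero _), ← constantCoeff_eq]
  simp [zero_geom_sum, hM]

lemma phiTrunc_one : phiTrunc a 1 = 1 := by
  rw [phiTrunc_eq_weightedHomogeneousComponent, Finset.sum_range_one, pow_zero]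
  exact weightedHomogeneousComponent_eq_self (isWeightedHomogeneous_one ..)

variable {a} {p : ℕ} [Fact p.Prime]

theorem hasGhostExpansion_phiTrunc (hΔ : uniqueInteriorPoint a) :
    HasGhostExpansion (expandHom (Fin N) ℤ p) (p : MvPolynomial (Fin N) ℤ)
      (fun s => phiTrunc a (p ^ s)) := by
  simp only [phiTrunc_eq_weightedHomogeneousComponent]
  refine hasGhostExpansion_weightedHomogeneousComponent_geom_sum
    (fun k l u hl h => eq_zero_of_weight_relExponent_eq_nsmul hΔ hl h) ?_
  refine totalDegree_finsetSum_le fun i _ => ?_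
  rw [totalDegree_neg, totalDegree_X]

theorem natCast_dvd_phiTrunc_sub (hΔ : uniqueInteriorPoint a) (s : ℕ) :
    (p : MvPolynomial (Fin N) ℤ) ∣
      phiTrunc a (p ^ (s + 1)) - phiTrunc a p * expand p (phiTrunc a (p ^ s)) := by
  simpa only [pow_one, expandHom_apply] using (hasGhostExpansion_phiTrunc hΔ).dvd_sub_mul
    (by simpa only [pow_zero] using phiTrunc_one a) s

theorem phiTrunc_dwork_congruence (hΔ : uniqueInteriorPoint a) (s : ℕ) :
    (p : MvPolynomial (Fin N) ℤ) ^ (s + 1) ∣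
      phiTrunc a (p ^ (s + 2)) * expand p (phiTrunc a (p ^ s)) -
        phiTrunc a (p ^ (s + 1)) * expand p (phiTrunc a (p ^ (s + 1))) := by
  have hp : p.Prime := Fact.out
  refine (hasGhostExpansion_phiTrunc hΔ).dwork_congruence (map_natCast _ p) (prime_natCast hp)
    (fun k m => not_natCast_dvd_of_constantCoeff_eq_one hp.ne_one ?_) s
  rw [constantCoeff_expandHom_pow hp.ne_zero, constantCoeff_phiTrunc a (pow_ne_zero m hp.ne_zero)]

end Truncation

section IntegralEvaluation

variable {τ K : Type*} [NormedField K] [IsUltrametricDist K] {y : τ → K}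

lemma norm_aeval_le_one (hy : ∀ i, ‖y i‖ ≤ 1) (f : MvPolynomial τ ℤ) : ‖aeval y f‖ ≤ 1 := by
  induction f using MvPolynomial.induction_on with
  | C c => simpa using IsUltrametricDist.norm_intCast_le_one K c
  | add f g hf hg =>
    rw [map_add]
    exact (IsUltrametricDist.norm_add_le_max _ _).trans (max_le hf hg)
  | mul_X f i hf =>
    rw [map_mul, aeval_X, norm_mul]
    exact mul_le_one₀ hf (norm_nonneg _) (hy i)

lemma norm_aeval_le_of_pow_dvd (hy : ∀ i, ‖y i‖ ≤ 1) {p k : ℕ} {f : MvPolynomial τ ℤ}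
    (hf : (p : MvPolynomial τ ℤ) ^ k ∣ f) : ‖aeval y f‖ ≤ ‖(p : K)‖ ^ k := by
  obtain ⟨g, rfl⟩ := hf
  rw [map_mul, map_pow, map_natCast, norm_mul, norm_pow]
  exact mul_le_of_le_one_right (by positivity) (norm_aeval_le_one hy g)

lemma norm_aeval_sub_constantCoeff_lt_one (hy : ∀ i, ‖y i‖ < 1) (f : MvPolynomial τ ℤ) :
    ‖aeval y f - constantCoeff f‖ < 1 := by
  induction f using MvPolynomial.induction_on with
  | C c => simp
  | add f g hf hg =>
    rw [map_add, map_add, Int.cast_add, add_sub_add_comm]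
    exact (IsUltrametricDist.norm_add_le_max _ _).trans_lt (max_lt hf hg)
  | mul_X f i =>
    rw [map_mul, map_mul, aeval_X, constantCoeff_X, mul_zero, Int.cast_zero, sub_zero, norm_mul]
    exact mul_lt_one_of_nonneg_of_lt_one_right (norm_aeval_le_one (fun i => (hy i).le) f)
      (norm_nonneg _) (hy i)

lemma norm_eq_one_of_norm_sub_lt_one {x z : K} (hz : ‖z‖ = 1) (h : ‖x - z‖ < 1) : ‖x‖ = 1 := by
  rw [← hz] at h ⊢
  have hmax := IsUltrametricDist.norm_add_eq_max_of_norm_ne_norm h.ne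
  rwa [sub_add_cancel, max_eq_right h.le] at hmax

lemma norm_aeval_eq_one_of_constantCoeff_eq_one (hy : ∀ i, ‖y i‖ < 1) {f : MvPolynomial τ ℤ}
    (hf : constantCoeff f = 1) : ‖aeval y f‖ = 1 :=
  norm_eq_one_of_norm_sub_lt_one norm_one
    (by simpa [hf] using norm_aeval_sub_constantCoeff_lt_one hy f)

variable {p : ℕ}

lemma norm_aeval_eq_one_of_dvd_sub (hp : ‖(p : K)‖ < 1) (hy : ∀ i, ‖y i‖ ≤ 1)
    {f g : MvPolynomial τ ℤ} (hfg : (p : MvPolynomial τ ℤ) ∣ f - g) (hg : ‖aeval y g‖ = 1) :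
    ‖aeval y f‖ = 1 := by
  refine norm_eq_one_of_norm_sub_lt_one hg ?_
  rw [← map_sub]
  exact (norm_aeval_le_of_pow_dvd hy (k := 1) (by rwa [pow_one])).trans_lt (by rwa [pow_one])

lemma norm_aeval_expand_eq_one [Fact p.Prime] (hp : ‖(p : K)‖ < 1) (hy : ∀ i, ‖y i‖ ≤ 1)
    {f : MvPolynomial τ ℤ} (hf : ‖aeval y f‖ = 1) : ‖aeval y (expand p f)‖ = 1 :=
  norm_aeval_eq_one_of_dvd_sub hp hy ((dvd_sub_comm).1 (isFrobeniusLift_expandHom τ p f))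
    (by rw [map_pow, norm_pow, hf, one_pow])

end IntegralEvaluation

section Convergence

lemma exists_tendstoUniformlyOn_of_norm_sub_le {α E : Type*} [NormedAddCommGroup E]
    [CompleteSpace E] {u : ℕ → α → E} {s : Set α} {b : ℕ → ℝ} (hb : Summable b)
    (hu : ∀ k, ∀ x ∈ s, ‖u (k + 1) x - u k x‖ ≤ b k) :
    ∃ F : α → E, TendstoUniformlyOn u F atTop s := by
  have htail := tendstoUniformlyOn_tsum_nat (f := fun k x => u (k + 1) x - u k x) hb hu
  have hsum (M x) : ∑ k ∈ Finset.range M, (u (k + 1) x - u k x) = u M x - u 0 x :=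
    Finset.sum_range_sub (u · x) M
  simp only [hsum] at htail
  refine ⟨fun x => (∑' k, (u (k + 1) x - u k x)) + u 0 x, ?_⟩
  rw [Metric.tendstoUniformlyOn_iff] at htail ⊢
  simpa only [dist_eq_norm, sub_sub_eq_add_sub] using htail

variable {n N : ℕ} (a : Fin (N + 1) → Fin n → ℤ)

lemma aeval_phiTrunc {A : Type*} [CommRing A] (y : Fin N → A) (M : ℕ) :
    aeval y (phiTrunc a M) = ∑ l ∈ exponentsBelow N M with l ∈ LplusSet a, phiTerm y l := by
  simp only [phiTrunc, map_sum, map_phiTerm, aeval_X]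

lemma tendsto_exponentsBelow_atTop : Tendsto (exponentsBelow N) atTop atTop := by
  refine tendsto_atTop_finset_of_monotone (fun M M' h l hl => ?_) fun l =>
    ⟨∑ i, l i + 1, mem_exponentsBelow.2 (Nat.lt_succ_self _)⟩
  exact mem_exponentsBelow.2 ((mem_exponentsBelow.1 hl).trans_le h)

lemma tendsto_aeval_phiTrunc {A : Type*} [CommRing A] [TopologicalSpace A] {y : Fin N → A} {s : A}
    (hs : HasSum (fun l : LplusSet a => phiTerm y l) s) :
    Tendsto (fun M => aeval y (phiTrunc a M)) atTop (𝓝 s) := by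
  have h := ((hasSum_subtype_iff_indicator (f := phiTerm y)).1 hs).comp tendsto_exponentsBelow_atTop
  refine h.congr fun M => ?_
  simp only [aeval_phiTrunc, Function.comp_apply, Set.indicator_apply, Finset.sum_filter]

variable {K : Type*} [NormedField K] [IsUltrametricDist K] {y : Fin N → K}

lemma norm_phiTerm_le (y : Fin N → K) (l : Fin N → ℕ) : ‖phiTerm y l‖ ≤ ‖y‖ ^ ∑ i, l i := by
  rw [phiTerm, norm_mul, norm_mul, norm_pow, norm_neg, norm_one, one_pow, one_mul, norm_prod,
    ← Finset.prod_pow_eq_pow_sum]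
  refine (mul_le_of_le_one_left (by positivity)
    (IsUltrametricDist.norm_natCast_le_one K _)).trans ?_
  refine Finset.prod_le_prod (fun _ _ => norm_nonneg _) fun i _ => ?_
  rw [norm_pow]
  exact pow_le_pow_left₀ (norm_nonneg _) (norm_le_pi_norm y i) _

lemma tendsto_sum_cofinite_atTop :
    Tendsto (fun l : Fin N → ℕ => ∑ i, l i) cofinite atTop := by
  rw [← Nat.cofinite_eq_atTop]
  refine Tendsto.cofinite_of_finite_preimage_singleton fun m => ?_
  exact (Finset.finite_toSet (Finset.piAntidiag Finset.univ m)).subset fun l hl => by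
    simpa using hl

lemma summable_phiTerm [CompleteSpace K] (hy : ∀ i, ‖y i‖ < 1) :
    Summable (fun l : LplusSet a => phiTerm y l) := by
  have hpow := tendsto_pow_atTop_nhds_zero_of_lt_one (norm_nonneg y)
    ((pi_norm_lt_iff one_pos).2 hy)
  have hterm : Tendsto (phiTerm y) cofinite (𝓝 0) :=
    squeeze_zero_norm (norm_phiTerm_le y) (hpow.comp tendsto_sum_cofinite_atTop)
  exact NonarchimedeanAddGroup.summable_of_tendsto_cofinite_zero
    (hterm.comp Subtype.val_injective.tendsto_cofinite)

end Convergence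

section DworkQuotient

variable {n N : ℕ} {a : Fin (N + 1) → Fin n → ℤ} {p : ℕ} [Fact p.Prime]
  {K : Type*} [NormedField K]

/-- The approximation to `Φ(λ) / Φ(λ ^ p)` obtained by truncating the numerator at degree
`p ^ (s + 1)` and the denominator at degree `p ^ s`, in the coordinates `y i = λ_i / λ_0`. -/
noncomputable def dworkQuotient (p : ℕ) (a : Fin (N + 1) → Fin n → ℤ) (s : ℕ) (y : Fin N → K) : K :=
  aeval y (phiTrunc a (p ^ (s + 1))) / aeval y (expand p (phiTrunc a (p ^ s)))

lemma Phi1_eq_aeval_phiTrunc (lam : Fin (N + 1) → K) :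
    Phi1 p a lam = aeval (fun i => lam i.succ / lam 0) (phiTrunc a p) := by
  have hp := (Fact.out : p.Prime).pos
  rw [aeval_phiTrunc]
  refine Finset.sum_congr (Finset.ext fun l => ?_) fun _ _ => rfl
  simp only [Finset.mem_filter, Fintype.mem_piFinset, Finset.mem_range, mem_exponentsBelow]
  constructor
  · rintro ⟨-, hl, hsum⟩
    exact ⟨by omega, hl⟩
  · rintro ⟨hsum, hl⟩
    exact ⟨fun i => (Finset.single_le_sum_of_canonicallyOrdered (Finset.mem_univ i)).trans_lt hsum,
      hl, by omega⟩

lemma tendsto_dworkQuotient {y : Fin N → K} {s t : K}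
    (hs : HasSum (fun l : LplusSet a => phiTerm y l) s)
    (ht : HasSum (fun l : LplusSet a => phiTerm (y ^ p) l) t) (ht0 : t ≠ 0) :
    Tendsto (fun k => dworkQuotient p a k y) atTop (𝓝 (s / t)) := by
  have hpow := tendsto_pow_atTop_atTop_of_one_lt (Fact.out : p.Prime).one_lt
  simp only [dworkQuotient, aeval_expand]
  exact ((tendsto_aeval_phiTrunc a hs).comp (hpow.comp (tendsto_add_atTop_nat 1))).div
    ((tendsto_aeval_phiTrunc a ht).comp hpow) ht0

variable [IsUltrametricDist K] {y : Fin N → K}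

theorem norm_aeval_phiTrunc_eq_one (hp : ‖(p : K)‖ < 1) (hΔ : uniqueInteriorPoint a)
    (hy : ∀ i, ‖y i‖ ≤ 1) (h1 : ‖aeval y (phiTrunc a p)‖ = 1) (s : ℕ) :
    ‖aeval y (phiTrunc a (p ^ s))‖ = 1 := by
  induction s with
  | zero => rw [pow_zero, phiTrunc_one, map_one, norm_one]
  | succ s ih =>
    refine norm_aeval_eq_one_of_dvd_sub hp hy (natCast_dvd_phiTrunc_sub hΔ s) ?_
    rw [map_mul, norm_mul, h1, norm_aeval_expand_eq_one hp hy ih, one_mul]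

theorem norm_dworkQuotient_succ_sub_le (hp : ‖(p : K)‖ < 1) (hΔ : uniqueInteriorPoint a)
    (hy : ∀ i, ‖y i‖ ≤ 1) (h1 : ‖aeval y (phiTrunc a p)‖ = 1) (s : ℕ) :
    ‖dworkQuotient p a (s + 1) y - dworkQuotient p a s y‖ ≤ ‖(p : K)‖ ^ (s + 1) := by
  have hden (s) : ‖aeval y (expand p (phiTrunc a (p ^ s)))‖ = 1 :=
    norm_aeval_expand_eq_one hp hy (norm_aeval_phiTrunc_eq_one hp hΔ hy h1 s)
  have hden0 (s) : aeval y (expand p (phiTrunc a (p ^ s))) ≠ 0 :=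
    norm_ne_zero_iff.1 (by rw [hden s]; exact one_ne_zero)
  rw [dworkQuotient, dworkQuotient, div_sub_div _ _ (hden0 _) (hden0 _), norm_div, norm_mul, hden,
    hden, one_mul, div_one, mul_comm (aeval y (expand p _)), ← map_mul, ← map_mul, ← map_sub]
  exact norm_aeval_le_of_pow_dvd hy (phiTrunc_dwork_congruence hΔ s)

theorem ratOnDplus_dworkQuotient (hp : ‖(p : K)‖ < 1) (hΔ : uniqueInteriorPoint a) (s : ℕ) :
    RatOnDplus p a fun lam : Fin (N + 1) → K =>
      dworkQuotient p a s fun i => lam i.succ / lam 0 := by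
  have heval (y : Fin N → K) (f : MvPolynomial (Fin N) ℤ) :
      eval y (map (algebraMap ℤ K) f) = aeval y f := by rw [eval_map, aeval_def]
  refine ⟨map (algebraMap ℤ K) (phiTrunc a (p ^ (s + 1))),
    map (algebraMap ℤ K) (expand p (phiTrunc a (p ^ s))), fun lam ⟨_, hy, h1⟩ => ?_,
    fun lam _ => by simp only [heval, dworkQuotient]⟩
  rw [Phi1_eq_aeval_phiTrunc] at h1
  rw [heval, ← norm_ne_zero_iff,
    norm_aeval_expand_eq_one hp hy (norm_aeval_phiTrunc_eq_one hp hΔ hy h1 s)]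
  exact one_ne_zero

lemma Dopen_subset_Dplus : (Dopen : Set (Fin (N + 1) → K)) ⊆ Dplus p a := by
  refine fun lam ⟨h0, hy⟩ => ⟨h0, fun i => (hy i).le, ?_⟩
  rw [Phi1_eq_aeval_phiTrunc]
  exact norm_aeval_eq_one_of_constantCoeff_eq_one hy
    (constantCoeff_phiTrunc a (Fact.out : p.Prime).ne_zero)

lemma norm_sum_phiTerm_eq_one (hy : ∀ i, ‖y i‖ < 1) {s : K}
    (hs : HasSum (fun l : LplusSet a => phiTerm y l) s) : ‖s‖ = 1 := by
  refine tendsto_nhds_unique (tendsto_aeval_phiTrunc a hs).norm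
    (tendsto_const_nhds.congr' ((eventually_ne_atTop 0).mono fun M hM => ?_))
  exact (norm_aeval_eq_one_of_constantCoeff_eq_one hy (constantCoeff_phiTrunc a hM)).symm

end DworkQuotient

end AHG

theorem stmt_19_general (p : ℕ) [Fact p.Prime]
    {K : Type*} [NormedField K] [IsUltrametricDist K] [CompleteSpace K] (hp : ‖(p : K)‖ < 1)
    {n N : ℕ} (a : Fin (N + 1) → Fin n → ℤ) (hΔ : AHG.uniqueInteriorPoint a) :
    ∃ F : (Fin (N + 1) → K) → K, AHG.UnifLimitRat p a F ∧
      ∀ lam ∈ AHG.Dopen (N := N) (K := K), ∃ s t : K,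
        HasSum (fun l : AHG.LplusSet a =>
          (-1 : K) ^ (∑ i : Fin N, l.1 i) * (Nat.multinomial Finset.univ l.1 : K) *
            ∏ i : Fin N, (lam i.succ / lam 0) ^ l.1 i) s ∧
        HasSum (fun l : AHG.LplusSet a =>
          (-1 : K) ^ (∑ i : Fin N, l.1 i) * (Nat.multinomial Finset.univ l.1 : K) *
            ∏ i : Fin N, (lam i.succ ^ p / lam 0 ^ p) ^ l.1 i) t ∧
        t ≠ 0 ∧ F lam = s / t := by
  have hb : Summable fun k => ‖(p : K)‖ ^ (k + 1) :=
    (summable_nat_add_iff 1).2 (summable_geometric_of_lt_one (norm_nonneg _) hp)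
  obtain ⟨F, hF⟩ := AHG.exists_tendstoUniformlyOn_of_norm_sub_le (s := AHG.Dplus p a)
    (u := fun k lam => AHG.dworkQuotient p a k fun i => lam i.succ / lam 0) hb
    fun k lam hlam => AHG.norm_dworkQuotient_succ_sub_le hp hΔ hlam.2.1
      (AHG.Phi1_eq_aeval_phiTrunc (p := p) (a := a) lam ▸ hlam.2.2) k
  refine ⟨F, ⟨_, AHG.ratOnDplus_dworkQuotient hp hΔ, hF⟩, fun lam hlam => ?_⟩
  set y : Fin N → K := fun i => lam i.succ / lam 0
  have hy : ∀ i, ‖y i‖ < 1 := hlam.2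
  have hyp (i) : ‖(y ^ p) i‖ < 1 := by
    rw [Pi.pow_apply, norm_pow]
    exact pow_lt_one₀ (norm_nonneg _) (hy i) (Fact.out : p.Prime).ne_zero
  obtain ⟨s, hs⟩ := AHG.summable_phiTerm a hy
  obtain ⟨t, ht⟩ := AHG.summable_phiTerm a hyp
  have ht0 : t ≠ 0 := norm_ne_zero_iff.1 (by simp [AHG.norm_sum_phiTerm_eq_one hyp ht])
  refine ⟨s, t, hs, ?_, ht0, tendsto_nhds_unique (hF.tendsto_at (AHG.Dopen_subset_Dplus hlam))
    (AHG.tendsto_dworkQuotient hs ht ht0)⟩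
  simpa only [AHG.phiTerm, y, Pi.pow_apply, div_pow] using ht

/-- Theorem 1.4: if `a_0` is the unique interior lattice point of `Δ`, the
ratio `Φ(λ)/Φ(λ^p)` extends to an analytic element on `𝒟_+`: there is a uniform limit `F`
on `𝒟_+` of rational functions in the `λ_i/λ_0` defined on `𝒟_+` such that
`F(λ) = Φ(λ)/Φ(λ^p)` for every `λ ∈ 𝒟` (both series converging there, with
`Φ(λ^p) ≠ 0`). -/
theorem stmt_19 (p : ℕ) [Fact p.Prime] (hp2 : p ≠ 2)
    {K : Type*} [NormedField K] [IsUltrametricDist K] [CompleteSpace K] [IsAlgClosed K]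
    (ι : ℚ_[p] →+* K) (hι : ∀ x, ‖ι x‖ = ‖x‖)
    (n N : ℕ) (hn : 0 < n) (hN : 0 < N) (a : Fin (N + 1) → Fin n → ℤ)
    (hΔ : AHG.uniqueInteriorPoint a) :
    ∃ F : (Fin (N + 1) → K) → K, AHG.UnifLimitRat p a F ∧
      ∀ lam ∈ AHG.Dopen (N := N) (K := K), ∃ s t : K,
        HasSum (fun l : AHG.LplusSet a =>
          (-1 : K) ^ (∑ i : Fin N, l.1 i) * (Nat.multinomial Finset.univ l.1 : K) *
            ∏ i : Fin N, (lam i.succ / lam 0) ^ l.1 i) s ∧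
        HasSum (fun l : AHG.LplusSet a =>
          (-1 : K) ^ (∑ i : Fin N, l.1 i) * (Nat.multinomial Finset.univ l.1 : K) *
            ∏ i : Fin N, (lam i.succ ^ p / lam 0 ^ p) ^ l.1 i) t ∧
        t ≠ 0 ∧ F lam = s / t := by
  refine stmt_19_general p ?_ a hΔ
  rw [← map_natCast ι p, hι]
  exact Padic.norm_p_lt_one
end
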